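/- arXiv:2306.16365 — 4 statements merged into one kernel-verified Lean document; each statement's English description precedes it below -/
import Mathlib

section
/- For every integer t ≥ 2, there exist a constant c > 0 and an integer n₀ such that for all n ≥ n₀, Ex(X_t, n) ≥ c · n · (log n / log log n)^t. -/
/-!
The lower bound comes from a Toeplitz matrix: entry `(i, j)` is `1` iff `j - i` lies in a set `D`
of natural numbers, one for each `t`-subset `S` of `{0, …, b-1}`. The number of `S` is written in a
base `m = 3K + 1`; its digits are supported on `S`, and the digit at `i ∈ S` is a label in `[1, K]`
that determines the part of `S` above `i`. Since `K = (b+1)^t` labels suffice, `m ^ b ≤ n / 2` holds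
with `b` of order `log n / log log n`, and the matrix has at least `(n / 2) * choose b t` ones.

Suppose that rows `r₁ < ⋯ < r_{2t}` and columns `c₁ < ⋯ < c_{2t+1}` form a copy of `X_t`, and let
`x = c_{2t+1} - r₁`, `v = c₂ - r₁`, `u = c_{2t+1} - r_{2t}`, all in `D`. Columns `2` and `2t+1`
give a decreasing chain of length `2t` from `x` to `u` that alternates between elements of
`D + (x - v)` and `D`; similarly the first and last rows give a chain from `x` to `v` alternating
between `D + (x - u)` and `D`. As the base exceeds all digit differences that occur, these numbers
compare lexicographically by digits (`numVal_lt`, `sandwich`).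

The main lemma is `IsCode.no_chain`. Once `x` and `v` have different digits above some position,
their labels below it never agree again. At the next position `p` where the chain of `x` and `v`
moves, `x` has a positive digit and `u` has digit `0`; the difference of labels makes it impossible
for the chain to drop slowly, so all but its last two members keep the digit of `x` at `p`. Thus
each pair of members costs one of the `t` elements of `x`, which is too expensive.
To apply this, compare the leading positions `p`, `q` where `x` differs from `u`, `v`. If `p < q`
the column chain is impossible, if `q < p` the row chain is. If `p = q` is not the leading position
of `x`, the column chain without its last two members is impossible; otherwise `u + v < x`,
which contradicts the entry in the last row and first column, as that entry is nonnegative.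
-/

/-- `A` contains the pattern `P`: there are strictly increasing row and column maps
carrying the 1-entries of `P` to 1-entries of `A`. -/
def PatContains {k l m n : ℕ} (P : Fin k → Fin l → Prop) (A : Fin m → Fin n → Bool) : Prop :=
  ∃ (r : Fin k → Fin m) (c : Fin l → Fin n),
    StrictMono r ∧ StrictMono c ∧ ∀ i j, P i j → A (r i) (c j) = true

/-- The number of 1-entries (weight) of a 0–1 matrix. -/
def wt {m n : ℕ} (A : Fin m → Fin n → Bool) : ℕ :=
  (Finset.univ.filter (fun p : Fin m × Fin n => A p.1 p.2 = true)).card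

/-- `matEx P n` is the maximum weight of an `n × n` 0–1 matrix avoiding the pattern `P`. -/
noncomputable def matEx {k l : ℕ} (P : Fin k → Fin l → Prop) (n : ℕ) : ℕ :=
  sSup {w | ∃ A : Fin n → Fin n → Bool, ¬ PatContains P A ∧ wt A = w}

/-- The 1-entries of the pattern `X_t`, with 0-indexed row `i ∈ {0,…,2t-1}` and
column `j ∈ {0,…,2t}` (so `i+1`, `j+1` are the 1-indexed positions). -/
def XpatN (t i j : ℕ) : Prop :=
  (i + 1 = 1 ∧ (((j + 1) % 2 = 0 ∧ 2 ≤ j + 1 ∧ j + 1 ≤ 2 * t) ∨ j + 1 = 2 * t + 1)) ∨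
  (i + 1 = 2 * t ∧ (((j + 1) % 2 = 1 ∧ j + 1 ≤ 2 * t - 1) ∨ j + 1 = 2 * t + 1)) ∨
  (j + 1 = 2 ∧ (i + 1) % 2 = 1 ∧ 3 ≤ i + 1 ∧ i + 1 ≤ 2 * t - 1) ∨
  (j + 1 = 2 * t + 1 ∧ (i + 1) % 2 = 0 ∧ 2 ≤ i + 1 ∧ i + 1 ≤ 2 * t - 2)

/-- The `2t × (2t+1)` pattern `X_t`. -/
def Xpat (t : ℕ) : Fin (2 * t) → Fin (2 * t + 1) → Prop := fun i j => XpatN t i.val j.val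

section helpers

open Finset

/-! ### Numbers with signed digits -/

/-- The number with (signed) digits `g i`, `i < b`, in base `m`. -/
def numVal (m : ℤ) (b : ℕ) (g : ℕ → ℤ) : ℤ := ∑ i ∈ range b, g i * m ^ i

lemma numVal_add_sub (m : ℤ) (b : ℕ) (f g h : ℕ → ℤ) :
    numVal m b (fun i => f i + g i - h i) = numVal m b f + numVal m b g - numVal m b h := by
  simp only [numVal, ← sum_add_distrib, ← sum_sub_distrib]
  exact sum_congr rfl fun i _ => by ring

lemma geom_digits (M : ℤ) (p : ℕ) : ∑ i ∈ range p, M * (M + 1) ^ i = (M + 1) ^ p - 1 := by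
  induction p with
  | zero => simp
  | succ p ih => rw [sum_range_succ, ih]; ring

/-- Comparison of numbers is lexicographic in their digits as soon as the digit differences are
smaller than the base; digits may be negative. -/
lemma numVal_lt {M : ℤ} (hM : 0 ≤ M) {b p : ℕ} {g h : ℕ → ℤ} (hp : p < b)
    (hb : ∀ i, g i - h i ≤ M) (hpos : g p < h p) (heq : ∀ i, p < i → g i = h i) :
    numVal (M + 1) b g < numVal (M + 1) b h := by
  have key : ∑ i ∈ range b, (h i - g i) * (M + 1) ^ i > 0 := by
    have hsub : range (p + 1) ⊆ range b := range_subset_range.2 hp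
    rw [← sum_subset hsub, sum_range_succ]
    · have h1 : ∑ i ∈ range p, (-(M * (M + 1) ^ i)) ≤ ∑ i ∈ range p, (h i - g i) * (M + 1) ^ i := by
        refine sum_le_sum fun i _ => ?_
        have := hb i
        have h2 : 0 ≤ (M + 1) ^ i := by positivity
        nlinarith
      rw [sum_neg_distrib, geom_digits] at h1
      have h2 : 0 < (M + 1) ^ p := by positivity
      nlinarith
    · intro i _ hi
      rw [heq i (by simpa using hi)]; ring
  have : numVal (M + 1) b h - numVal (M + 1) b g = ∑ i ∈ range b, (h i - g i) * (M + 1) ^ i := by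
    simp only [numVal, ← sum_sub_distrib]
    exact sum_congr rfl fun i _ => by ring
  linarith

lemma digit_le_of_numVal_le {M : ℤ} (hM : 0 ≤ M) {b p : ℕ} {g h : ℕ → ℤ}
    (hz : ∀ i, b ≤ i → g i = h i) (hb : ∀ i, h i - g i ≤ M)
    (hle : numVal (M + 1) b g ≤ numVal (M + 1) b h) (heq : ∀ i, p < i → g i = h i) :
    g p ≤ h p := by
  rcases lt_or_ge p b with hp | hp
  · by_contra! hcon
    have := numVal_lt hM hp hb hcon (fun i hi => (heq i hi).symm)
    linarith
  · exact (hz p hp).le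

/-- A number lying between two numbers with the same digits above `p` has these digits above `p`
too, and its digit at `p` lies between theirs. -/
lemma sandwich {M : ℤ} (hM : 0 ≤ M) {b p : ℕ} {g h l : ℕ → ℤ}
    (hz : ∀ i, b ≤ i → g i = h i) (hz' : ∀ i, b ≤ i → h i = l i)
    (hb : ∀ i, h i - g i ≤ M) (hb' : ∀ i, l i - h i ≤ M)
    (hgh : numVal (M + 1) b g ≤ numVal (M + 1) b h)
    (hhl : numVal (M + 1) b h ≤ numVal (M + 1) b l)
    (heq : ∀ i, p < i → g i = l i) :
    (∀ i, p < i → h i = l i) ∧ g p ≤ h p ∧ h p ≤ l p := by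
  have above : ∀ d i, p < i → b - i = d → h i = l i := by
    intro d
    induction d using Nat.strong_induction_on with
    | _ d ih =>
      intro i hi hd
      rcases le_or_gt b i with hbi | hbi
      · exact hz' i hbi
      have h1 : ∀ j, i < j → h j = l j := fun j hj => ih (b - j) (by omega) j (by omega) rfl
      have h2 := digit_le_of_numVal_le hM hz hb hgh (p := i)
        (fun j hj => (heq j (by omega)).trans (h1 j hj).symm)
      have h3 := digit_le_of_numVal_le hM hz' hb' hhl (p := i) h1
      have := heq i hi
      linarith
  have above' : ∀ i, p < i → h i = l i := fun i hi => above _ i hi rfl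
  exact ⟨above', digit_le_of_numVal_le hM hz hb hgh
    (fun j hj => (heq j hj).trans (above' j hj).symm),
    digit_le_of_numVal_le hM hz' hb' hhl above'⟩

/-- Distinct numbers have a leading differing digit, which decides their order. -/
lemma exists_top_diff {M : ℤ} (hM : 0 ≤ M) {b : ℕ} {g h : ℕ → ℤ}
    (hz : ∀ i, b ≤ i → g i = h i) (hb : ∀ i, h i - g i ≤ M)
    (hlt : numVal (M + 1) b g < numVal (M + 1) b h) :
    ∃ p, g p < h p ∧ ∀ i, p < i → g i = h i := by
  have hne : ((range b).filter fun i => g i ≠ h i).Nonempty := by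
    by_contra hcon
    rw [not_nonempty_iff_eq_empty, filter_eq_empty_iff] at hcon
    refine hlt.ne (sum_congr rfl fun i hi => ?_)
    rw [not_not.1 (hcon hi)]
  have htop : ∀ i, ((range b).filter fun i => g i ≠ h i).max' hne < i → g i = h i := by
    intro i hi
    by_contra hcon
    rcases le_or_gt b i with hbi | hbi
    · exact hcon (hz i hbi)
    · exact absurd (le_max' ((range b).filter fun i => g i ≠ h i) i
        (mem_filter.2 ⟨mem_range.2 hbi, hcon⟩)) (not_le.2 hi)
  exact ⟨_, lt_of_le_of_ne (digit_le_of_numVal_le hM hz hb hlt.le htop)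
    (mem_filter.1 (max'_mem _ hne)).2, htop⟩

/-! ### Digit vectors of sets -/

/-- `code` labels finite sets by integers in `[1, K]`, injectively on the subsets of `{0, …, b-1}`
with at most `t` elements. -/
structure IsCode (b t : ℕ) (K : ℤ) (code : Finset ℕ → ℤ) : Prop where
  pos : ∀ S, 1 ≤ code S
  le : ∀ S, code S ≤ K
  inj : ∀ S S', S ⊆ range b → S' ⊆ range b → S.card ≤ t → S'.card ≤ t → code S = code S' → S = S'

/-- The digit vector of a set `S`: it is supported on `S`, and the digit at `i ∈ S` is the label
of the part of `S` above `i`. -/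
def dig (code : Finset ℕ → ℤ) (S : Finset ℕ) (i : ℕ) : ℤ :=
  if i ∈ S then code (S.filter (i < ·)) else 0

section dig
variable {b t : ℕ} {K : ℤ} {code : Finset ℕ → ℤ}

lemma IsCode.K_pos (hc : IsCode b t K code) : 1 ≤ K := (hc.pos ∅).trans (hc.le ∅)

lemma IsCode.dig_nonneg (hc : IsCode b t K code) (S : Finset ℕ) (i : ℕ) : 0 ≤ dig code S i := by
  unfold dig; split_ifs
  · linarith [hc.pos (S.filter (i < ·))]
  · rfl

lemma IsCode.dig_le (hc : IsCode b t K code) (S : Finset ℕ) (i : ℕ) : dig code S i ≤ K := by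
  unfold dig; split_ifs
  · exact hc.le _
  · linarith [hc.K_pos]

lemma IsCode.dig_pos_iff (hc : IsCode b t K code) {S : Finset ℕ} {i : ℕ} :
    0 < dig code S i ↔ i ∈ S := by
  unfold dig; split_ifs with h
  · simp only [h, iff_true]; linarith [hc.pos (S.filter (i < ·))]
  · simp [h]

lemma dig_of_notMem {S : Finset ℕ} {i : ℕ} (h : i ∉ S) : dig code S i = 0 := if_neg h

lemma dig_zero {S : Finset ℕ} (h : S ⊆ range b) {i : ℕ} (hi : b ≤ i) : dig code S i = 0 :=
  dig_of_notMem fun hm => by have := mem_range.1 (h hm); omega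

lemma IsCode.filter_eq (hc : IsCode b t K code) {S S' : Finset ℕ} {p : ℕ}
    (h : ∀ i, p < i → dig code S i = dig code S' i) : S.filter (p < ·) = S'.filter (p < ·) := by
  ext i
  simp only [mem_filter, and_congr_left_iff]
  intro hi
  rw [← hc.dig_pos_iff, ← hc.dig_pos_iff, h i hi]

lemma IsCode.dig_eq_or (hc : IsCode b t K code) {S S' : Finset ℕ} {p : ℕ}
    (h : ∀ i, p < i → dig code S i = dig code S' i) :
    dig code S p = 0 ∨ dig code S p = code (S'.filter (p < ·)) := by
  rw [← hc.filter_eq h]; unfold dig; split_ifs <;> simp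

lemma IsCode.dig_injective (hc : IsCode b t K code) {S S' : Finset ℕ}
    (h : ∀ i, dig code S i = dig code S' i) : S = S' := by
  ext i; rw [← hc.dig_pos_iff, ← hc.dig_pos_iff, h i]

lemma card_filter_lt {S : Finset ℕ} {p : ℕ} (hp : p ∈ S) : (S.filter (p < ·)).card < S.card :=
  card_lt_card (filter_ssubset.2 ⟨p, hp, lt_irrefl p⟩)

end dig

/-! ### Alternating chains -/

/-- The digits of `T j` for even `j`, and of `T j` shifted by the difference of `x` and `v` for
odd `j`. -/
def altDig (code : Finset ℕ → ℤ) (x v : Finset ℕ) (T : ℕ → Finset ℕ) (j i : ℕ) : ℤ :=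
  if j % 2 = 0 then dig code (T j) i else dig code (T j) i + dig code x i - dig code v i

section chain
variable {b t : ℕ} {K : ℤ} {code : Finset ℕ → ℤ} {x v : Finset ℕ} {T : ℕ → Finset ℕ}

lemma altDig_even {j : ℕ} (h : j % 2 = 0) : altDig code x v T j = dig code (T j) := by
  funext i; simp [altDig, h]

lemma altDig_odd {j : ℕ} (h : j % 2 = 1) :
    altDig code x v T j = fun i => dig code (T j) i + dig code x i - dig code v i := by
  funext i; simp [altDig, h]

lemma altDig_one (h1 : T 1 = v) : altDig code x v T 1 = dig code x := by
  rw [altDig_odd rfl, h1]; funext i; ring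

lemma altDig_zero (hx : x ⊆ range b) (hv : v ⊆ range b) {j : ℕ} (hT : T j ⊆ range b) {i : ℕ}
    (hi : b ≤ i) : altDig code x v T j i = 0 := by
  simp [altDig, dig_zero hx hi, dig_zero hv hi, dig_zero hT hi]

lemma IsCode.altDig_sub_le (hc : IsCode b t K code) (j j' i : ℕ) :
    altDig code x v T j i - altDig code x v T j' i ≤ 3 * K := by
  have a1 := hc.dig_nonneg (T j) i
  have a2 := hc.dig_nonneg (T j') i
  have a3 := hc.dig_nonneg x i
  have a4 := hc.dig_nonneg v i
  have b1 := hc.dig_le (T j) i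
  have b2 := hc.dig_le (T j') i
  have b3 := hc.dig_le x i
  have b4 := hc.dig_le v i
  unfold altDig
  split_ifs <;> linarith

/-- In a decreasing alternating chain whose ends agree above `p`, all members agree above `p`, and
their digits at `p` decrease. -/
lemma IsCode.chain_sandwich (hc : IsCode b t K code) (hx : x ⊆ range b) (hv : v ⊆ range b)
    {N p : ℕ} (hT : ∀ j, 1 ≤ j → j ≤ N → T j ⊆ range b)
    (hdec : ∀ i j, 1 ≤ i → i < j → j ≤ N →
      numVal (3 * K + 1) b (altDig code x v T j) < numVal (3 * K + 1) b (altDig code x v T i))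
    (heq : ∀ i, p < i → altDig code x v T N i = altDig code x v T 1 i) :
    (∀ j, 1 ≤ j → j ≤ N → ∀ i, p < i → altDig code x v T j i = altDig code x v T 1 i) ∧
    (∀ i j, 1 ≤ i → i ≤ j → j ≤ N → altDig code x v T j p ≤ altDig code x v T i p) := by
  have hM : 0 ≤ 3 * K := by linarith [hc.K_pos]
  have hle : ∀ i j, 1 ≤ i → i ≤ j → j ≤ N →
      numVal (3 * K + 1) b (altDig code x v T j) ≤ numVal (3 * K + 1) b (altDig code x v T i) := by
    intro i j hi hij hj
    rcases hij.eq_or_lt with rfl | h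
    · rfl
    · exact (hdec i j hi h hj).le
  have hz : ∀ j j', 1 ≤ j → j ≤ N → 1 ≤ j' → j' ≤ N → ∀ i, b ≤ i →
      altDig code x v T j i = altDig code x v T j' i := by
    intro j j' h1 h2 h3 h4 i hi
    rw [altDig_zero hx hv (hT j h1 h2) hi, altDig_zero hx hv (hT j' h3 h4) hi]
  have h1 : ∀ j, 1 ≤ j → j ≤ N → ∀ i, p < i → altDig code x v T j i = altDig code x v T 1 i := by
    intro j hj1 hj
    exact (sandwich hM (hz N j (by omega) le_rfl hj1 hj) (hz j 1 hj1 hj le_rfl (by omega))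
      (hc.altDig_sub_le j N) (hc.altDig_sub_le 1 j) (hle j N hj1 hj le_rfl)
      (hle 1 j le_rfl hj1 hj) heq).1
  refine ⟨h1, fun i j hi hij hj => ?_⟩
  exact digit_le_of_numVal_le hM (hz j i (by omega) hj hi (by omega)) (hc.altDig_sub_le i j)
    (hle i j hi hij hj) fun l hl => (h1 j (by omega) hj l hl).trans (h1 i hi (by omega) l hl).symm

/-- Core of the argument. A decreasing chain of length `2k`, starting at `x` and alternating between
numbers of sets shifted by `x - v` and unshifted ones, cannot exist if the whole chain agrees at
and above a position `P`, if `x` and `v` differ there, and if `x` has at least `t + 1 - k` elements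
there. Indeed, at the next position where the chain moves, all but its last two members have the
digit of `x`, so two members of the chain use up one of the fewer than `k` remaining elements
of `x`. -/
lemma IsCode.no_chain (hc : IsCode b t K code) (hx : x ⊆ range b) (hxt : x.card = t)
    (hv : v ⊆ range b) (hvt : v.card = t) (h1 : T 1 = v) (k : ℕ) (hk : 1 ≤ k) :
    ∀ P : ℕ, (∀ j, 1 ≤ j → j ≤ 2 * k → T j ⊆ range b) →
    (∀ i j, 1 ≤ i → i < j → j ≤ 2 * k →
      numVal (3 * K + 1) b (altDig code x v T j) < numVal (3 * K + 1) b (altDig code x v T i)) →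
    (∀ j, 1 ≤ j → j ≤ 2 * k → ∀ i, P ≤ i → altDig code x v T j i = dig code x i) →
    (∃ i, P ≤ i ∧ dig code x i ≠ dig code v i) →
    t + 1 ≤ (x.filter (P ≤ ·)).card + k → False := by
  induction k, hk using Nat.le_induction with
  | base =>
    intro P hT hdec hag _ hcard
    -- Here `x` has no element below `P`, so nothing smaller agrees with it at and above `P`.
    have hfx : x.filter (P ≤ ·) = x := eq_of_subset_of_card_le (filter_subset _ _) (by omega)
    have hlt := hdec 1 2 le_rfl (by norm_num) (by norm_num)
    rw [altDig_one h1] at hlt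
    refine absurd hlt (not_lt.2 (sum_le_sum fun i hi => ?_))
    have hpw : 0 ≤ (3 * K + 1) ^ i := by have := hc.K_pos; positivity
    refine mul_le_mul_of_nonneg_right ?_ hpw
    rcases le_or_gt P i with hPi | hPi
    · exact (hag 2 (by norm_num) (by norm_num) i hPi).ge
    · have : i ∉ x := by
        rw [← hfx]; simp; omega
      rw [dig_of_notMem this, altDig_even rfl]
      exact hc.dig_nonneg _ _
  | succ k hk ih =>
    intro P hT hdec hag hdiff hcard
    have hM : 0 ≤ 3 * K := by linarith [hc.K_pos]
    obtain ⟨p, hp, hpa⟩ := exists_top_diff hM (g := altDig code x v T (2 * (k + 1)))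
      (h := altDig code x v T 1)
      (fun i hi => by
        rw [altDig_zero hx hv (hT _ (by omega) le_rfl) hi, altDig_zero hx hv (hT 1 le_rfl (by omega)) hi])
      (hc.altDig_sub_le _ _) (hdec 1 _ le_rfl (by omega) le_rfl)
    have hpP : p < P := by
      by_contra! hcon
      rw [hag _ (by omega) le_rfl p hcon, hag 1 le_rfl (by omega) p hcon] at hp
      exact lt_irrefl _ hp
    obtain ⟨hs1, hs2⟩ := hc.chain_sandwich hx hv hT hdec hpa
    rw [altDig_one h1] at hs1 hp
    have hpx : p ∈ x := by
      rw [← hc.dig_pos_iff]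
      refine lt_of_le_of_lt ?_ hp
      rw [altDig_even (by omega)]; exact hc.dig_nonneg _ _
    have hxp : dig code x p = code (x.filter (p < ·)) := if_pos hpx
    have heven : ∀ j, 1 ≤ j → j ≤ 2 * (k + 1) → j % 2 = 0 →
        altDig code x v T j p = 0 ∨ altDig code x v T j p = dig code x p := by
      intro j hj1 hj hj2
      have := hs1 j hj1 hj
      rw [altDig_even hj2] at this ⊢
      rw [hxp]; exact hc.dig_eq_or this
    have hlast : altDig code x v T (2 * (k + 1)) p = 0 := by
      rcases heven _ (by omega) le_rfl (by omega) with h | h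
      · exact h
      · exact absurd h hp.ne
    -- The last odd member has a nonzero digit at `p`, since `x` and `v` have distinct labels there.
    have hodd : altDig code x v T (2 * k + 1) p ≠ 0 := by
      intro h0
      have ha := hs1 (2 * k + 1) (by omega) (by omega)
      rw [altDig_odd (by omega)] at h0 ha
      have hTv : ∀ i, p < i → dig code (T (2 * k + 1)) i = dig code v i := by
        intro i hi; have := ha i hi; simp only at this; linarith
      simp only at h0
      have e1 := hc.dig_eq_or hTv
      have e2 : dig code v p = 0 ∨ dig code v p = code (v.filter (p < ·)) :=
        hc.dig_eq_or fun _ _ => rfl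
      have hpos := hc.pos (x.filter (p < ·))
      have hpos' := hc.pos (v.filter (p < ·))
      have hcode : code (x.filter (p < ·)) = code (v.filter (p < ·)) := by
        rcases e1 with e1 | e1 <;> rcases e2 with e2 | e2 <;> rw [e1, e2, hxp] at h0 <;> linarith
      have hfe : x.filter (p < ·) = v.filter (p < ·) :=
        hc.inj _ _ ((filter_subset _ _).trans hx) ((filter_subset _ _).trans hv)
          ((card_filter_le _ _).trans hxt.le) ((card_filter_le _ _).trans hvt.le) hcode
      obtain ⟨i, hi, hne⟩ := hdiff
      apply hne
      have hmem : i ∈ x ↔ i ∈ v := by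
        have := congrArg (i ∈ ·) hfe
        simpa [show p < i by omega] using this
      have hfi : x.filter (i < ·) = v.filter (i < ·) := by
        ext l
        have := congrArg (l ∈ ·) hfe
        simp only [mem_filter, eq_iff_iff] at this ⊢
        constructor
        · rintro ⟨ha, hb⟩; exact ⟨(this.1 ⟨ha, by omega⟩).1, hb⟩
        · rintro ⟨ha, hb⟩; exact ⟨(this.2 ⟨ha, by omega⟩).1, hb⟩
      unfold dig
      rw [hfi]; simp only [hmem]
    have hpen : altDig code x v T (2 * k) p = dig code x p := by
      have g1 := hs2 (2 * k) (2 * k + 1) (by omega) (by omega) (by omega)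
      have g2 := hs2 (2 * k + 1) (2 * (k + 1)) (by omega) (by omega) (by omega)
      rcases heven (2 * k) (by omega) (by omega) (by omega) with h | h
      · rw [h] at g1; rw [hlast] at g2
        exact absurd (le_antisymm g1 g2) hodd
      · exact h
    refine ih p (fun j a c => hT j a (by omega)) (fun i j a c d => hdec i j a c (by omega)) ?_ ?_ ?_
    · intro j hj1 hj i hi
      rcases hi.eq_or_lt with rfl | hi
      · have g1 := hs2 1 j le_rfl hj1 (by omega)
        have g2 := hs2 j (2 * k) hj1 hj (by omega)
        rw [altDig_one h1] at g1
        rw [hpen] at g2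
        exact le_antisymm g1 g2
      · exact hs1 j hj1 (by omega) i hi
    · obtain ⟨i, hi, hne⟩ := hdiff
      exact ⟨i, by omega, hne⟩
    · have : (x.filter (P ≤ ·)).card < (x.filter (p ≤ ·)).card := by
        refine card_lt_card ⟨fun i hi => ?_, fun hcon => ?_⟩
        · simp only [mem_filter] at hi ⊢; exact ⟨hi.1, by omega⟩
        · have := hcon (mem_filter.2 ⟨hpx, le_rfl⟩)
          simp only [mem_filter] at this; omega
      omega

end chain

/-! ### Avoiding the pattern -/

section avoid
variable {b t : ℕ} {K : ℤ} {code : Finset ℕ → ℤ}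

/-- Rows `r` and columns `c` whose differences at the 1-entries of `X_t` are all numbers of
`t`-sets do not exist. -/
lemma IsCode.avoid (hc : IsCode b t K code) (ht : 2 ≤ t) (r c : ℕ → ℤ)
    (hr : ∀ i j, i < j → j < 2 * t → r i < r j) (hcm : ∀ i j, i < j → j < 2 * t + 1 → c i < c j)
    (h : ∀ i j, i < 2 * t → j < 2 * t + 1 → XpatN t i j →
      ∃ S : Finset ℕ, S ⊆ range b ∧ S.card = t ∧ c j - r i = numVal (3 * K + 1) b (dig code S)) :
    False := by
  have hM : 0 ≤ 3 * K := by linarith [hc.K_pos]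
  choose! S hSb hSt hSv using h
  -- `x`, `v`, `u` are the entries in the first and last row and the second and last column.
  obtain ⟨x, hx⟩ : ∃ x, x = S 0 (2 * t) := ⟨_, rfl⟩
  obtain ⟨v, hv⟩ : ∃ v, v = S 0 1 := ⟨_, rfl⟩
  obtain ⟨u, hu⟩ : ∃ u, u = S (2 * t - 1) (2 * t) := ⟨_, rfl⟩
  have X0 : XpatN t 0 (2 * t) := by unfold XpatN; omega
  have V0 : XpatN t 0 1 := by unfold XpatN; omega
  have U0 : XpatN t (2 * t - 1) (2 * t) := by unfold XpatN; omega
  have W0 : XpatN t (2 * t - 1) 0 := by unfold XpatN; omega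
  have hxb := hSb 0 (2 * t) (by omega) (by omega) X0
  have hxt := hSt 0 (2 * t) (by omega) (by omega) X0
  have hxv := hSv 0 (2 * t) (by omega) (by omega) X0
  have hvb := hSb 0 1 (by omega) (by omega) V0
  have hvt := hSt 0 1 (by omega) (by omega) V0
  have hvv := hSv 0 1 (by omega) (by omega) V0
  have hub := hSb (2 * t - 1) (2 * t) (by omega) (by omega) U0
  have hut := hSt (2 * t - 1) (2 * t) (by omega) (by omega) U0
  have huv := hSv (2 * t - 1) (2 * t) (by omega) (by omega) U0
  rw [← hx] at hxb hxt hxv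
  rw [← hv] at hvb hvt hvv
  rw [← hu] at hub hut huv
  -- `T` runs down the second and last columns, `T'` runs leftwards along the first and last rows.
  obtain ⟨T, hT⟩ : ∃ T : ℕ → Finset ℕ,
      ∀ j, T j = if j % 2 = 0 then S (j - 1) (2 * t) else S (j - 1) 1 := ⟨_, fun _ => rfl⟩
  obtain ⟨T', hT'⟩ : ∃ T' : ℕ → Finset ℕ, ∀ j, T' j =
      if j % 2 = 0 then S 0 (2 * t + 1 - j) else S (2 * t - 1) (2 * t + 1 - j) := ⟨_, fun _ => rfl⟩
  have T1 : T 1 = v := by rw [hT, hv]; rfl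
  have T1' : T' 1 = u := by rw [hT', hu]; rfl
  have Tlast : T (2 * t) = u := by rw [hT, if_pos (by omega), hu]
  have Tlast' : T' (2 * t) = v := by
    rw [hT', if_pos (by omega), hv]; congr 1; omega
  have hTb : ∀ j, 1 ≤ j → j ≤ 2 * t → T j ⊆ range b := by
    intro j h1 h2
    rw [hT]; split_ifs
    · exact hSb _ _ (by omega) (by omega) (by unfold XpatN; omega)
    · exact hSb _ _ (by omega) (by omega) (by unfold XpatN; omega)
  have hTb' : ∀ j, 1 ≤ j → j ≤ 2 * t → T' j ⊆ range b := by
    intro j h1 h2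
    rw [hT']; split_ifs
    · exact hSb _ _ (by omega) (by omega) (by unfold XpatN; omega)
    · exact hSb _ _ (by omega) (by omega) (by unfold XpatN; omega)
  have hval : ∀ j, 1 ≤ j → j ≤ 2 * t →
      numVal (3 * K + 1) b (altDig code x v T j) = c (2 * t) - r (j - 1) := by
    intro j h1 h2
    rcases Nat.mod_two_eq_zero_or_one j with hj | hj
    · rw [altDig_even hj, hT, if_pos hj,
        hSv (j - 1) (2 * t) (by omega) (by omega) (by unfold XpatN; omega)]
    · rw [altDig_odd hj, numVal_add_sub, hT, if_neg (by omega),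
        ← hSv (j - 1) 1 (by omega) (by omega) (by unfold XpatN; omega), ← hxv, ← hvv]
      ring
  have hval' : ∀ j, 1 ≤ j → j ≤ 2 * t →
      numVal (3 * K + 1) b (altDig code x u T' j) = c (2 * t + 1 - j) - r 0 := by
    intro j h1 h2
    rcases Nat.mod_two_eq_zero_or_one j with hj | hj
    · rw [altDig_even hj, hT', if_pos hj,
        hSv 0 (2 * t + 1 - j) (by omega) (by omega) (by unfold XpatN; omega)]
    · rw [altDig_odd hj, numVal_add_sub, hT', if_neg (by omega),
        ← hSv (2 * t - 1) (2 * t + 1 - j) (by omega) (by omega) (by unfold XpatN; omega),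
        ← hxv, ← huv]
      ring
  have hdec : ∀ i j, 1 ≤ i → i < j → j ≤ 2 * t →
      numVal (3 * K + 1) b (altDig code x v T j) < numVal (3 * K + 1) b (altDig code x v T i) := by
    intro i j h1 h2 h3
    rw [hval j (by omega) h3, hval i h1 (by omega)]
    linarith [hr (i - 1) (j - 1) (by omega) (by omega)]
  have hdec' : ∀ i j, 1 ≤ i → i < j → j ≤ 2 * t →
      numVal (3 * K + 1) b (altDig code x u T' j) <
        numVal (3 * K + 1) b (altDig code x u T' i) := by
    intro i j h1 h2 h3
    rw [hval' j (by omega) h3, hval' i h1 (by omega)]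
    linarith [hcm (2 * t + 1 - j) (2 * t + 1 - i) (by omega) (by omega)]
  have hdd : ∀ S S' i, dig code S i - dig code S' i ≤ 3 * K := by
    intro S S' i
    linarith [hc.dig_nonneg S' i, hc.dig_le S i, hc.K_pos]
  have hzz : ∀ {S S' : Finset ℕ}, S ⊆ range b → S' ⊆ range b → ∀ i, b ≤ i →
      dig code S i = dig code S' i := fun h h' i hi => by rw [dig_zero h hi, dig_zero h' hi]
  -- The leading positions where `x` differs from `u`, respectively `v`.
  obtain ⟨p, hp, hpa⟩ := exists_top_diff hM (hzz hub hxb) (hdd x u)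
    (by rw [← huv, ← hxv]; linarith [hr 0 (2 * t - 1) (by omega) (by omega)])
  obtain ⟨q, hq, hqa⟩ := exists_top_diff hM (hzz hvb hxb) (hdd x v)
    (by rw [← hvv, ← hxv]; linarith [hcm 1 (2 * t) (by omega) (by omega)])
  have hpx : p ∈ x := hc.dig_pos_iff.1 (lt_of_le_of_lt (hc.dig_nonneg _ _) hp)
  have hqx : q ∈ x := hc.dig_pos_iff.1 (lt_of_le_of_lt (hc.dig_nonneg _ _) hq)
  have hsand := hc.chain_sandwich (p := p) hxb hvb hTb hdec (by
    intro i hi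
    rw [altDig_one T1, altDig_even (by omega), Tlast, hpa i hi])
  have hsand' := hc.chain_sandwich (p := q) hxb hub hTb' hdec' (by
    intro i hi
    rw [altDig_one T1', altDig_even (by omega), Tlast', hqa i hi])
  rw [altDig_one T1] at hsand
  rw [altDig_one T1'] at hsand'
  have hcardpos : ∀ P w, w ∈ x → P ≤ w → 1 ≤ (x.filter (P ≤ ·)).card := fun P w hw hP =>
    card_pos.2 ⟨w, mem_filter.2 ⟨hw, hP⟩⟩
  rcases lt_trichotomy p q with hpq | hpq | hpq
  · have := hcardpos (p + 1) q hqx hpq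
    exact hc.no_chain hxb hxt hvb hvt T1 t (by omega) (p + 1) hTb hdec
      (fun j h1 h2 i hi => hsand.1 j h1 h2 i hi) ⟨q, hpq, hq.ne'⟩ (by omega)
  · subst hpq
    have hup : dig code u p = 0 := by
      rcases hc.dig_eq_or hpa with h | h
      · exact h
      · rw [h, dig, if_pos hpx] at hp; exact absurd hp (lt_irrefl _)
    have hvp : dig code v p = 0 := by
      rcases hc.dig_eq_or hqa with h | h
      · exact h
      · rw [h, dig, if_pos hpx] at hq; exact absurd hq (lt_irrefl _)
    rcases (x.filter (p < ·)).eq_empty_or_nonempty with hemp | ⟨w, hw⟩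
    · -- `p` is the leading element of `x`, so `u + v < x`; this contradicts the entry in the last
      -- row and first column.
      have hx0 : ∀ i, p < i → dig code x i = 0 := by
        intro i hi
        refine dig_of_notMem fun hm => ?_
        have : i ∈ x.filter (p < ·) := mem_filter.2 ⟨hm, hi⟩
        rw [hemp] at this; simp at this
      have hlt : numVal (3 * K + 1) b (fun i => dig code u i + dig code v i - 0) <
          numVal (3 * K + 1) b (dig code x) := by
        refine numVal_lt hM (p := p) (mem_range.1 (hxb hpx)) ?_ ?_ ?_
        · intro i
          linarith [hc.dig_nonneg x i, hc.dig_le u i, hc.dig_le v i, hc.K_pos]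
        · simp only [hup, hvp]; simpa [hup] using hp
        · intro i hi
          simp only [hpa i hi, hqa i hi, hx0 i hi]; rfl
      rw [numVal_add_sub _ _ _ _ (fun _ => 0), ← hxv, ← huv, ← hvv] at hlt
      have h0 : numVal (3 * K + 1) b (fun _ => 0) = 0 := by simp [numVal]
      have hw0 := hSv (2 * t - 1) 0 (by omega) (by omega) W0
      have hwn : 0 ≤ numVal (3 * K + 1) b (dig code (S (2 * t - 1) 0)) :=
        sum_nonneg fun i _ => mul_nonneg (hc.dig_nonneg _ _) (by positivity)
      have := hcm 0 1 (by omega) (by omega)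
      linarith
    · rw [mem_filter] at hw
      have hcard : 2 ≤ (x.filter (p ≤ ·)).card := by
        refine one_lt_card.2 ⟨p, mem_filter.2 ⟨hpx, le_rfl⟩, w, mem_filter.2 ⟨hw.1, hw.2.le⟩, ?_⟩
        exact hw.2.ne
      refine hc.no_chain hxb hxt hvb hvt T1 (t - 1) (by omega) p
        (fun j h1 h2 => hTb j h1 (by omega)) (fun i j h1 h2 h3 => hdec i j h1 h2 (by omega)) ?_
        ⟨p, le_rfl, hq.ne'⟩ (by omega)
      intro j h1 h2 i hi
      rcases hi.eq_or_lt with rfl | hi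
      · have g1 := hsand.2 1 j le_rfl h1 (by omega)
        have g2 := hsand.2 j (2 * t - 1) h1 (by omega) (by omega)
        rw [altDig_one T1] at g1
        rw [altDig_odd (by omega)] at g2
        simp only [hvp] at g2
        linarith [hc.dig_nonneg (T (2 * t - 1)) p]
      · exact hsand.1 j h1 (by omega) i hi
  · have := hcardpos (q + 1) p hpx hpq
    exact hc.no_chain hxb hxt hub hut T1' t (by omega) (q + 1) hTb' hdec'
      (fun j h1 h2 i hi => hsand'.1 j h1 h2 i hi) ⟨p, hpq, hp.ne'⟩ (by omega)

end avoid

/-! ### The Toeplitz matrix and its weight -/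

/-- There are at most `(b+1)^t` sets to be labelled. -/
lemma exists_isCode (b t : ℕ) : ∃ code, IsCode b t (((b + 1) ^ t : ℕ) : ℤ) code := by
  classical
  obtain ⟨P, hP⟩ : ∃ P, P = (range (t + 1)).biUnion fun k => powersetCard k (range b) := ⟨_, rfl⟩
  have hcard : P.card ≤ (b + 1) ^ t := by
    rw [hP]
    refine card_biUnion_le.trans ?_
    rw [add_pow]
    refine sum_le_sum fun k hk => ?_
    have hk' : 0 < t.choose k := Nat.choose_pos (by simpa [Nat.lt_succ_iff] using hk)
    simp only [card_powersetCard, card_range, one_pow, mul_one]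
    exact (Nat.choose_le_pow b k).trans (Nat.le_mul_of_pos_right _ hk')
  refine ⟨fun S => if h : S ∈ P then ((P.equivFin ⟨S, h⟩ : ℕ) : ℤ) + 1 else 1, ?_, ?_, ?_⟩
  · intro S; split_ifs <;> omega
  · intro S; split_ifs with h
    · have := (P.equivFin ⟨S, h⟩).isLt
      have h2 : (P.equivFin ⟨S, h⟩ : ℕ) + 1 ≤ (b + 1) ^ t := by omega
      exact_mod_cast h2
    · exact_mod_cast Nat.one_le_pow _ _ (Nat.succ_pos b)
  · intro S S' hS hS' hc hc' heq
    have m1 : S ∈ P := by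
      rw [hP, mem_biUnion]
      exact ⟨S.card, mem_range.2 (by omega), mem_powersetCard.2 ⟨hS, rfl⟩⟩
    have m2 : S' ∈ P := by
      rw [hP, mem_biUnion]
      exact ⟨S'.card, mem_range.2 (by omega), mem_powersetCard.2 ⟨hS', rfl⟩⟩
    simp only [m1, m2, dif_pos] at heq
    have h3 : (P.equivFin ⟨S, m1⟩ : ℕ) = P.equivFin ⟨S', m2⟩ := by exact_mod_cast add_right_cancel heq
    have := P.equivFin.injective (Fin.ext h3)
    exact congrArg Subtype.val this

lemma IsCode.numVal_lt_pow {b t : ℕ} {K : ℤ} {code : Finset ℕ → ℤ} (hc : IsCode b t K code)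
    (S : Finset ℕ) : numVal (3 * K + 1) b (dig code S) < (3 * K + 1) ^ b := by
  have hK := hc.K_pos
  have h : numVal (3 * K + 1) b (dig code S) ≤ ∑ i ∈ range b, 3 * K * (3 * K + 1) ^ i := by
    refine sum_le_sum fun i _ => mul_le_mul_of_nonneg_right ?_ (by positivity)
    linarith [hc.dig_le S i]
  rw [geom_digits] at h
  omega

lemma IsCode.numVal_injOn {b t : ℕ} {K : ℤ} {code : Finset ℕ → ℤ} (hc : IsCode b t K code)
    {S S' : Finset ℕ} (hS : S ⊆ range b) (hS' : S' ⊆ range b)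
    (h : numVal (3 * K + 1) b (dig code S) = numVal (3 * K + 1) b (dig code S')) : S = S' := by
  have hK := hc.K_pos
  refine hc.dig_injective fun p => ?_
  have := sandwich (M := 3 * K) (by linarith) (b := b) (p := p) (g := dig code S)
    (h := dig code S') (l := dig code S)
    (fun i hi => by rw [dig_zero hS hi, dig_zero hS' hi])
    (fun i hi => by rw [dig_zero hS hi, dig_zero hS' hi])
    (fun i => by linarith [hc.dig_nonneg S i, hc.dig_le S' i])
    (fun i => by linarith [hc.dig_nonneg S' i, hc.dig_le S i]) h.le h.ge (fun _ _ => rfl)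
  exact le_antisymm this.2.1 this.2.2

lemma wt_le_matEx {k l n : ℕ} {P : Fin k → Fin l → Prop} {A : Fin n → Fin n → Bool}
    (h : ¬ PatContains P A) : wt A ≤ matEx P n := by
  refine le_csSup ⟨n * n, ?_⟩ ⟨A, h, rfl⟩
  rintro _ ⟨B, _, rfl⟩
  refine (card_le_univ _).trans ?_
  simp

/-- The Toeplitz matrix whose 1-entries are the positions `(i, j)` with `j - i` the number of some
`t`-set avoids `X_t`. -/
lemma matEx_ge {t : ℕ} (ht : 2 ≤ t) (b n : ℕ) :
    (n - (3 * (b + 1) ^ t + 1) ^ b) * b.choose t ≤ matEx (Xpat t) n := by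
  classical
  obtain ⟨code, hc⟩ := exists_isCode b t
  obtain ⟨K, hK⟩ : ∃ K : ℤ, K = (((b + 1) ^ t : ℕ) : ℤ) := ⟨_, rfl⟩
  obtain ⟨N, hN⟩ : ∃ N, N = (3 * (b + 1) ^ t + 1) ^ b := ⟨_, rfl⟩
  have hNK : (3 * K + 1) ^ b = (N : ℤ) := by rw [hK, hN]; push_cast; rfl
  rw [← hK] at hc
  rw [← hN]
  obtain ⟨A, hA⟩ : ∃ A : Fin n → Fin n → Bool, ∀ i j, A i j = true ↔
      ∃ S : Finset ℕ, S ⊆ range b ∧ S.card = t ∧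
        ((j : ℕ) : ℤ) - ((i : ℕ) : ℤ) = numVal (3 * K + 1) b (dig code S) :=
    ⟨fun i j => decide (∃ S : Finset ℕ, S ⊆ range b ∧ S.card = t ∧
        ((j : ℕ) : ℤ) - ((i : ℕ) : ℤ) = numVal (3 * K + 1) b (dig code S)),
      fun i j => decide_eq_true_iff⟩
  have havoid : ¬ PatContains (Xpat t) A := by
    rintro ⟨r, c, hr, hcm, h⟩
    refine hc.avoid ht (fun i => if h : i < 2 * t then ((r ⟨i, h⟩ : ℕ) : ℤ) else 0)
      (fun j => if h : j < 2 * t + 1 then ((c ⟨j, h⟩ : ℕ) : ℤ) else 0) ?_ ?_ ?_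
    · intro i j hij hj
      simp only [hj, hij.trans hj, dif_pos]
      exact_mod_cast hr (show (⟨i, hij.trans hj⟩ : Fin (2 * t)) < ⟨j, hj⟩ from hij)
    · intro i j hij hj
      simp only [hj, hij.trans hj, dif_pos]
      exact_mod_cast hcm (show (⟨i, hij.trans hj⟩ : Fin (2 * t + 1)) < ⟨j, hj⟩ from hij)
    · intro i j hi hj hX
      simp only [hi, hj, dif_pos]
      exact (hA _ _).1 (h ⟨i, hi⟩ ⟨j, hj⟩ hX)
  refine le_trans ?_ (wt_le_matEx havoid)
  have hV : ((powersetCard t (range b)).image fun S => numVal (3 * K + 1) b (dig code S)).card =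
      b.choose t := by
    rw [card_image_of_injOn, card_powersetCard, card_range]
    intro S hS S' hS' h
    exact hc.numVal_injOn (mem_powersetCard.1 hS).1 (mem_powersetCard.1 hS').1 h
  have hcount : (n - N) * b.choose t = (range (n - N) ×ˢ
      ((powersetCard t (range b)).image fun S => numVal (3 * K + 1) b (dig code S))).card := by
    rw [card_product, hV, card_range]
  rw [hcount, wt]
  refine le_trans (card_le_card ?_) (card_image_le
    (f := fun p : Fin n × Fin n => ((p.1 : ℕ), ((p.2 : ℕ) : ℤ) - ((p.1 : ℕ) : ℤ))))
  rintro ⟨i, z⟩ hiz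
  rw [mem_product, mem_range, mem_image] at hiz
  obtain ⟨hi, S, hS, hz⟩ := hiz
  simp only at hi hz
  have hz1 : z < (N : ℤ) := by rw [← hz, ← hNK]; exact hc.numVal_lt_pow S
  have hz0 : 0 ≤ z := by
    rw [← hz]
    have := hc.K_pos
    exact sum_nonneg fun i _ => mul_nonneg (hc.dig_nonneg _ _) (by positivity)
  obtain ⟨w, rfl⟩ := Int.eq_ofNat_of_zero_le hz0
  have hw : w < N := by exact_mod_cast hz1
  rw [mem_powersetCard] at hS
  refine mem_image.2 ⟨(⟨i, by omega⟩, ⟨i + w, by omega⟩), ?_, ?_⟩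
  · rw [mem_filter]
    refine ⟨mem_univ _, (hA _ _).2 ⟨S, hS.1, hS.2, ?_⟩⟩
    rw [hz]; push_cast; ring
  · simp

end helpers

/-- For every `t ≥ 2` there are `c > 0` and `n₀` such that for all `n ≥ n₀`,
`Ex(X_t, n) ≥ c · n · (log n / log log n)^t`. -/
theorem stmt0 (t : ℕ) (ht : 2 ≤ t) :
    ∃ (c : ℝ) (n₀ : ℕ), 0 < c ∧ ∀ n : ℕ, n₀ ≤ n →
      c * n * (Real.log n / Real.log (Real.log n)) ^ t ≤ (matEx (Xpat t) n : ℝ) := by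
  obtain ⟨C, hC⟩ : ∃ C : ℝ, C = 2 * ((t : ℝ) + 2) := ⟨_, rfl⟩
  have htR : (2 : ℝ) ≤ t := by exact_mod_cast ht
  have hCpos : 0 < C := by rw [hC]; positivity
  have hlog : Filter.Tendsto (fun n : ℕ => Real.log (n : ℝ)) Filter.atTop Filter.atTop :=
    Real.tendsto_log_atTop.comp tendsto_natCast_atTop_atTop
  have hsmall := hlog.eventually (Real.isLittleO_log_id_atTop.bound
    (show (0 : ℝ) < 1 / (C * (2 * t + 2)) by positivity))
  have hll := (Real.tendsto_log_atTop.comp hlog).eventually_ge_atTop 2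
  have hl2 := hlog.eventually_ge_atTop 2
  obtain ⟨n₀, hn₀⟩ := Filter.eventually_atTop.1 ((hsmall.and hll).and hl2)
  refine ⟨1 / (2 * t.factorial * (2 * C) ^ t), max n₀ 1, by positivity, fun n hn => ?_⟩
  obtain ⟨⟨h1, h2⟩, h3⟩ := hn₀ n ((le_max_left _ _).trans hn)
  have hn1 : 1 ≤ n := (le_max_right _ _).trans hn
  have hnpos : (0 : ℝ) < n := by exact_mod_cast hn1
  simp only [Function.comp_apply] at h2
  obtain ⟨L, hL⟩ : ∃ L, L = Real.log (n : ℝ) := ⟨_, rfl⟩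
  obtain ⟨l, hl⟩ : ∃ l, l = Real.log L := ⟨_, rfl⟩
  rw [← hL] at h1 h2 h3 ⊢
  rw [← hl] at h1 h2 ⊢
  have hLpos : 0 < L := by linarith
  have hlpos : 0 < l := by linarith
  simp only [id, Real.norm_eq_abs, abs_of_pos hLpos, abs_of_pos hlpos] at h1
  obtain ⟨y, hy⟩ : ∃ y, y = L / (C * l) := ⟨_, rfl⟩
  have hyL : y * (C * l) = L := by rw [hy]; field_simp
  have hy2 : 2 * (t : ℝ) + 2 ≤ y := by
    rw [hy, le_div_iff₀ (by positivity)]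
    calc (2 * (t : ℝ) + 2) * (C * l)
        ≤ (2 * (t : ℝ) + 2) * (C * (1 / (C * (2 * t + 2)) * L)) := by gcongr
      _ = L := by field_simp
  have hypos : 0 < y := by linarith
  obtain ⟨b, hb⟩ : ∃ b, b = ⌊y⌋₊ := ⟨_, rfl⟩
  have hby : (b : ℝ) ≤ y := hb ▸ Nat.floor_le hypos.le
  have hyb : y < b + 1 := hb ▸ Nat.lt_floor_add_one y
  have hbL : (b : ℝ) + 1 ≤ L := by
    have : 2 ≤ C * l := by rw [hC]; nlinarith
    nlinarith
  -- The base is at most `4 L ^ t`, so the numbers of sets stay below `n / 2`.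
  obtain ⟨m, hm⟩ : ∃ m, m = 3 * (b + 1) ^ t + 1 := ⟨_, rfl⟩
  have hm4 : (m : ℝ) ≤ 4 * L ^ t := by
    have e1 : (1 : ℝ) ≤ ((b : ℝ) + 1) ^ t := one_le_pow₀ (by linarith [b.cast_nonneg (α := ℝ)])
    have e2 : ((b : ℝ) + 1) ^ t ≤ L ^ t := by gcongr
    rw [hm]; push_cast; linarith
  have hmpos : (0 : ℝ) < m := by rw [hm]; push_cast; positivity
  have hlogm : Real.log m ≤ (t + 1) * l := by
    have e1 : Real.log m ≤ Real.log (4 * L ^ t) := Real.log_le_log hmpos hm4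
    rw [Real.log_mul (by norm_num) (by positivity), Real.log_pow, ← hl] at e1
    have e2 : Real.log 4 ≤ 2 := by
      have : Real.log 4 = 2 * Real.log 2 := by
        rw [show (4 : ℝ) = 2 ^ 2 by norm_num, Real.log_pow]; norm_num
      linarith [Real.log_two_lt_d9]
    linarith
  have hmb : ((m ^ b : ℕ) : ℝ) ≤ n / 2 := by
    have e1 : (b : ℝ) * Real.log m ≤ L - Real.log 2 := by
      have : (b : ℝ) * Real.log m ≤ y * ((t + 1) * l) :=
        (mul_le_mul_of_nonneg_left hlogm b.cast_nonneg).trans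
          (mul_le_mul_of_nonneg_right hby (by positivity))
      have e3 : 2 * (y * ((t + 1) * l)) ≤ L := by
        rw [← hyL, hC]
        have : 0 < y * l := by positivity
        nlinarith
      linarith [Real.log_two_lt_d9]
    have e2 := Real.exp_le_exp.2 e1
    rw [Real.exp_sub, Real.exp_log (by norm_num), hL, Real.exp_log hnpos, Real.exp_nat_mul,
      Real.exp_log hmpos] at e2
    exact_mod_cast e2
  have hmain := matEx_ge ht b n
  rw [← hm] at hmain
  have hmain' : ((n : ℝ) / 2) * (b.choose t : ℝ) ≤ (matEx (Xpat t) n : ℝ) := by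
    refine le_trans ?_ (Nat.cast_le.2 hmain)
    rw [Nat.cast_mul]
    refine mul_le_mul_of_nonneg_right ?_ (Nat.cast_nonneg _)
    have hle : m ^ b ≤ n := by
      have : ((m ^ b : ℕ) : ℝ) ≤ n := by linarith
      exact_mod_cast this
    rw [Nat.cast_sub hle]
    linarith
  have hchoose : (y / 2) ^ t / t.factorial ≤ (b.choose t : ℝ) := by
    refine le_trans ?_ (Nat.pow_le_choose t b)
    have htb : t ≤ b + 1 := by
      have : (t : ℝ) ≤ ((b + 1 : ℕ) : ℝ) := by push_cast; linarith
      exact_mod_cast this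
    have : y / 2 ≤ ((b + 1 - t : ℕ) : ℝ) := by
      rw [Nat.cast_sub htb]; push_cast; linarith
    gcongr
  refine le_trans ?_ hmain'
  refine le_trans (le_of_eq ?_) (mul_le_mul_of_nonneg_left hchoose (by positivity))
  have hLl : L / l = C * y := by rw [hy]; field_simp
  rw [hLl, div_pow, mul_pow, mul_pow]
  field_simp
end

section
/- For every integer t ≥ 2, there exists a constant C such that for all n ≥ 2, Ex(X_t, n) ≤ C · n · (log n)^{4t−3}. -/
/-- `y` lies in the left and `x` in the right half of a common dyadic interval of length
`2^(s+1)`: seen from `x`, the position `y` is to the left at scale `s`. -/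
def DyLeft (s y x : ℕ) : Prop := y / 2 ^ s + 1 = x / 2 ^ s ∧ (x / 2 ^ s) % 2 = 1

theorem DyLeft.div_succ_eq {s y x : ℕ} (h : DyLeft s y x) :
    y / 2 ^ (s + 1) = x / 2 ^ (s + 1) := by
  obtain ⟨h1, h2⟩ := h
  rw [pow_succ, ← Nat.div_div_eq_div_mul, ← Nat.div_div_eq_div_mul]
  omega

theorem DyLeft.lt {s y x : ℕ} (h : DyLeft s y x) : y < x := by
  by_contra hc
  have := Nat.div_le_div_right (c := 2 ^ s) (not_lt.mp hc)
  have := h.1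
  omega

/-- Positions seen from `x` at larger scales lie further to the left. -/
theorem DyLeft.lt_of_lt {a b x y z : ℕ} (hab : a < b) (hy : DyLeft a y x) (hz : DyLeft b z x) :
    z < y := by
  have hyx : y / 2 ^ b = x / 2 ^ b := by
    obtain ⟨d, rfl⟩ := Nat.exists_eq_add_of_lt hab
    rw [show a + d + 1 = (a + 1) + d by ring, pow_add, ← Nat.div_div_eq_div_mul,
      ← Nat.div_div_eq_div_mul, hy.div_succ_eq]
  by_contra hc
  have := Nat.div_le_div_right (c := 2 ^ b) (not_lt.mp hc)
  have := hz.1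
  omega

theorem exists_dyLeft {L y x : ℕ} (hx : x < 2 ^ L) (h : y < x) : ∃ s < L, DyLeft s y x := by
  induction L generalizing x y with
  | zero => simp at hx; omega
  | succ L ih =>
    by_cases hh : y / 2 = x / 2
    · exact ⟨0, by omega, by simp [DyLeft]; omega⟩
    · obtain ⟨s, hs, h1, h2⟩ := ih (x := x / 2) (y := y / 2)
        (by rw [pow_succ] at hx; omega) (by omega)
      refine ⟨s + 1, by omega, ?_, ?_⟩
      · rw [pow_succ', ← Nat.div_div_eq_div_mul, ← Nat.div_div_eq_div_mul]; exact h1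
      · rw [pow_succ', ← Nat.div_div_eq_div_mul]; exact h2

/-- Positions seen from `f 0` at strictly increasing scales form a decreasing sequence. -/
theorem lt_of_scales {m : ℕ} {f s : ℕ → ℕ} (hf : ∀ u, 1 ≤ u → u ≤ m → DyLeft (s u) (f u) (f 0))
    (hs : ∀ u v, 1 ≤ u → u < v → v ≤ m → s u < s v) {u v : ℕ} (huv : u < v) (hv : v ≤ m) :
    f v < f u := by
  rcases Nat.eq_zero_or_pos u with rfl | hu
  · exact (hf v (by omega) hv).lt
  · exact (hf u hu (by omega)).lt_of_lt (hs u v hu huv hv) (hf v (by omega) hv)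

section Scales

variable {α β : Type*} (x : α → ℕ) (g : α → β)

/-- `s` occurs among the scales of `e` with respect to the members of `M` in its line, where the
lines are the fibres of `g` and `x` is the position in a line. -/
def HasScale (M : Finset α) (e : α) (s : ℕ) : Prop :=
  ∃ e' ∈ M, g e' = g e ∧ DyLeft s (x e') (x e)

open Classical in
/-- The lowest scale of `e` with respect to `M`, and `0` if there is none. -/
noncomputable def lowScale (M : Finset α) (e : α) : ℕ :=
  if h : ∃ s, HasScale x g M e s then Nat.find h else 0

theorem hasScale_lowScale {M : Finset α} {e : α} (h : ∃ s, HasScale x g M e s) :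
    HasScale x g M e (lowScale x g M e) := by
  classical
  rw [lowScale, dif_pos h]
  exact Nat.find_spec h

theorem lowScale_le {M : Finset α} {e : α} {s : ℕ} (h : HasScale x g M e s) :
    lowScale x g M e ≤ s := by
  classical
  rw [lowScale, dif_pos ⟨s, h⟩]
  exact Nat.find_min' _ h

/-- Two entries of a line with the same lowest scale are further apart than that scale. The left
one is in a right half at its lowest scale, while it would be in a left half if the two were at this
very scale from each other. -/
theorem lowScale_lt {M : Finset α} {e e' : α} {s : ℕ} (he'M : e' ∈ M)
    (he' : ∃ s, HasScale x g M e' s) (hg : g e' = g e)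
    (hl : lowScale x g M e' = lowScale x g M e) (hd : DyLeft s (x e') (x e)) :
    lowScale x g M e < s := by
  refine lt_of_le_of_ne (lowScale_le x g ⟨e', he'M, hg, hd⟩) ?_
  intro hs
  obtain ⟨e'', -, -, hd'⟩ := hasScale_lowScale x g he'
  rw [hl, hs] at hd'
  have h1 := hd.1
  have h2 := hd.2
  have h3 := hd'.2
  omega

/-- Only the leftmost entry of a line has no scale. -/
theorem card_le_card_hasScale [DecidableEq β] {L : ℕ} {M : Finset α} (hx : ∀ e ∈ M, x e < 2 ^ L)
    (hinj : ∀ e ∈ M, ∀ e' ∈ M, g e = g e' → x e = x e' → e = e')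
    [DecidablePred fun e => ∃ s, HasScale x g M e s] :
    M.card ≤ (M.image g).card + (M.filter fun e => ∃ s, HasScale x g M e s).card := by
  rw [← Finset.card_filter_add_card_filter_not (s := M) (fun e => ∃ s, HasScale x g M e s), add_comm]
  refine Nat.add_le_add_right ?_ _
  refine Finset.card_le_card_of_injOn g ?_ ?_
  · intro e he
    simp only [Finset.coe_filter, Set.mem_ofPred_eq] at he
    exact Finset.mem_coe.2 (Finset.mem_image_of_mem g he.1)
  · intro e he e' he' hg
    simp only [Finset.coe_filter, Set.mem_ofPred_eq] at he he'
    rcases lt_trichotomy (x e) (x e') with h | h | h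
    · obtain ⟨s, -, hs⟩ := exists_dyLeft (hx e' he'.1) h
      exact absurd ⟨s, e, he.1, hg, hs⟩ he'.2
    · exact hinj e he.1 e' he'.1 hg h
    · obtain ⟨s, -, hs⟩ := exists_dyLeft (hx e he.1) h
      exact absurd ⟨s, e', he'.1, hg.symm, hs⟩ he.2

theorem lowScale_lt_of_lt_two_pow {L : ℕ} {M : Finset α} {e : α} (hxe : x e < 2 ^ L)
    (h : ∃ s, HasScale x g M e s) : lowScale x g M e < L := by
  obtain ⟨e', he', hg, hd⟩ := hasScale_lowScale x g h
  obtain ⟨s, hs, hsd⟩ := exists_dyLeft hxe hd.lt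
  exact lt_of_le_of_lt (lowScale_le x g ⟨e', he', hg, hsd⟩) hs

/-- Pigeonholing over the lowest scale. -/
theorem exists_popular_scale [DecidableEq β] {L N : ℕ} {M : Finset α}
    (hx : ∀ e ∈ M, x e < 2 ^ L)
    (hinj : ∀ e ∈ M, ∀ e' ∈ M, g e = g e' → x e = x e' → e = e')
    (hcard : (M.image g).card + L * N < M.card) :
    ∃ s, ∃ M' ⊆ M, N < M'.card ∧ (∀ e ∈ M', HasScale x g M e s) ∧
      ∀ e ∈ M', ∀ e' ∈ M', g e' = g e → ∀ s', DyLeft s' (x e') (x e) → s < s' := by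
  classical
  have h1 := card_le_card_hasScale x g hx hinj
  have h2 : (Finset.range L).card * N < (M.filter fun e => ∃ s, HasScale x g M e s).card := by
    rw [Finset.card_range]; omega
  obtain ⟨s, -, hs⟩ := Finset.exists_lt_card_fiber_of_mul_lt_card_of_maps_to
    (f := lowScale x g M) (fun e he => by
      rw [Finset.mem_filter] at he
      exact Finset.mem_range.2 (lowScale_lt_of_lt_two_pow x g (hx e he.1) he.2)) h2
  refine ⟨s, _, (Finset.filter_subset _ _).trans (Finset.filter_subset _ _), hs, ?_, ?_⟩
  · intro e he
    simp only [Finset.mem_filter] at he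
    rw [← he.2]
    exact hasScale_lowScale x g he.1.2
  · intro e he e' he' hg s' hd
    simp only [Finset.mem_filter] at he he'
    rw [← he.2]
    exact lowScale_lt x g he'.1.1 he'.1.2 hg (he'.2.trans he.2.symm) hd

/-- Iterated pigeonholing: more than `N` members of `M` have `k` common scales
`a 0 < ⋯ < a (k - 1)`, and those in a common line are pairwise further apart than all `a i`. -/
theorem exists_scales [DecidableEq β] {L N Q : ℕ} (hL : 1 ≤ L) (k : ℕ) {M : Finset α}
    (hx : ∀ e ∈ M, x e < 2 ^ L)
    (hinj : ∀ e ∈ M, ∀ e' ∈ M, g e = g e' → x e = x e' → e = e')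
    (hQ : (M.image g).card ≤ L * Q) (hcard : L ^ k * (N + k * Q) < M.card) :
    ∃ a : ℕ → ℕ, ∃ M' ⊆ M, N < M'.card ∧ (∀ i j, i < j → j < k → a i < a j) ∧
      (∀ e ∈ M', ∀ i < k, HasScale x g M e (a i)) ∧
      ∀ e ∈ M', ∀ e' ∈ M', g e' = g e → ∀ s', DyLeft s' (x e') (x e) → ∀ i < k, a i < s' := by
  induction k generalizing M with
  | zero =>
    exact ⟨fun _ => 0, M, subset_rfl, by simpa using hcard, by simp, by simp, by simp⟩
  | succ k ih =>
    have hstep : (M.image g).card + L * (L ^ k * (N + k * Q)) < M.card := by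
      refine lt_of_le_of_lt ?_ hcard
      have : 1 ≤ L ^ k := Nat.one_le_pow _ _ hL
      calc (M.image g).card + L * (L ^ k * (N + k * Q))
          ≤ L * (1 * Q) + L * (L ^ k * (N + k * Q)) := by simpa using hQ
        _ ≤ L * (L ^ k * Q) + L * (L ^ k * (N + k * Q)) := by gcongr
        _ = L ^ (k + 1) * (N + (k + 1) * Q) := by ring
    obtain ⟨s, M₁, hM₁, hc₁, hs₁, hsep₁⟩ := exists_popular_scale x g hx hinj hstep
    obtain ⟨a, M₂, hM₂, hc₂, ha, hs₂, hsep₂⟩ := ih (M := M₁) (fun e he => hx e (hM₁ he))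
      (fun e he e' he' => hinj e (hM₁ he) e' (hM₁ he'))
      ((Finset.card_le_card (Finset.image_subset_image hM₁)).trans hQ) hc₁
    obtain ⟨e₀, he₀⟩ : M₂.Nonempty := Finset.card_pos.1 (by omega)
    have hsa : ∀ i < k, s < a i := fun i hi => by
      obtain ⟨e', he', hg, hd⟩ := hs₂ e₀ he₀ i hi
      exact hsep₁ e₀ (hM₂ he₀) e' he' hg _ hd
    refine ⟨fun i => if i = 0 then s else a (i - 1), M₂, hM₂.trans hM₁, hc₂, ?_, ?_, ?_⟩
    · intro i j hij hj
      by_cases hi : i = 0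
      · simpa [hi, show j ≠ 0 by omega] using hsa (j - 1) (by omega)
      · simpa [hi, show j ≠ 0 by omega] using ha (i - 1) (j - 1) (by omega) (by omega)
    · intro e he i hi
      by_cases h0 : i = 0
      · simpa [h0] using hs₁ e (hM₂ he)
      · obtain ⟨e', he', h⟩ := hs₂ e he (i - 1) (by omega)
        simp only [h0, if_false]
        exact ⟨e', hM₁ he', h⟩
    · intro e he e' he' hg s' hd i hi
      by_cases h0 : i = 0
      · simpa [h0] using hsep₁ e (hM₂ he) e' (hM₂ he') hg s' hd
      · simpa [h0] using hsep₂ e he e' he' hg s' hd (i - 1) (by omega)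

end Scales

/-- The final configuration. The column scales are `b`, measured downwards (so positions are reversed
row indices), and the row scales are `σ < a 0 < a 1 < ⋯`, measured to the left. The hypotheses `hO`
and `hB` list the entries seen from `O` and from `B` in their rows, and `hM₁` those seen
from any member of `M₁` in its column. -/
theorem patContains_of_scales {t n : ℕ} (ht : 2 ≤ t) (X : Fin n → Fin n → Bool)
    (M₁ : Finset (Fin n × Fin n)) (hM₁X : ∀ e ∈ M₁, X e.1 e.2 = true)
    (a b : ℕ → ℕ) (σ τ : ℕ) (O B : Fin n × Fin n) (hOB : B.2 = O.2)
    (hOX : O ∈ M₁) (hBX : B ∈ M₁)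
    (hb : ∀ i j, i < j → j < 2 * t - 2 → b i < b j)
    (ha : ∀ i j, i < j → j < 2 * t - 1 → a i < a j)
    (hσ : σ < a 0) (hτ : ∀ i < 2 * t - 2, b i < τ)
    (hτB : DyLeft τ B.1.rev.val O.1.rev.val)
    (hσO : ∃ c, (O.1, c) ∈ M₁ ∧ DyLeft σ c.val O.2.val)
    (hO : ∀ i < 2 * t - 1, ∃ c, (O.1, c) ∈ M₁ ∧ DyLeft (a i) c.val O.2.val)
    (hB : ∀ i < 2 * t - 1, ∃ c, (B.1, c) ∈ M₁ ∧ DyLeft (a i) c.val B.2.val)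
    (hM₁ : ∀ e ∈ M₁, ∀ i < 2 * t - 2, ∃ r, X r e.2 = true ∧
      DyLeft (b i) r.rev.val e.1.rev.val) :
    PatContains (Xpat t) X := by
  -- Columns are indexed by their distance `u` from the last column of the pattern.
  have hcol : ∀ u, ∃ c : Fin n, (u = 0 → c = O.2) ∧
      (1 ≤ u → u ≤ 2 * t → DyLeft (if u = 1 then σ else a (u - 2)) c.val O.2.val) ∧
      (u % 2 = 1 → u ≤ 2 * t → (O.1, c) ∈ M₁) ∧ (u % 2 = 0 → u ≤ 2 * t → (B.1, c) ∈ M₁) := by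
    intro u
    by_cases hu : u ≤ 2 * t
    · by_cases h0 : u = 0
      · exact ⟨O.2, fun _ => rfl, by omega, by omega, fun _ _ => by rw [← hOB]; exact hBX⟩
      by_cases h1 : u = 1
      · obtain ⟨c, hc, hd⟩ := hσO
        exact ⟨c, by omega, fun _ _ => by simpa [h1] using hd, fun _ _ => hc, by omega⟩
      rcases Nat.mod_two_eq_zero_or_one u with hp | hp
      · obtain ⟨c, hc, hd⟩ := hB (u - 2) (by omega)
        exact ⟨c, by omega, fun _ _ => by rw [← hOB]; simpa [h1] using hd, by omega,
          fun _ _ => hc⟩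
      · obtain ⟨c, hc, hd⟩ := hO (u - 2) (by omega)
        exact ⟨c, by omega, fun _ _ => by simpa [h1] using hd, fun _ _ => hc, by omega⟩
    · exact ⟨O.2, by omega, by omega, by omega, by omega⟩
  choose c hc0 hcd hcO hcB using hcol
  have hA : (O.1, c (2 * t - 1)) ∈ M₁ := hcO _ (by omega) (by omega)
  have hrow : ∀ v, ∃ r : Fin n, (v = 0 → r = O.1) ∧ (v = 2 * t - 1 → r = B.1) ∧
      (1 ≤ v → v ≤ 2 * t - 1 →
        DyLeft (if v = 2 * t - 1 then τ else b (v - 1)) r.rev.val O.1.rev.val) ∧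
      (v % 2 = 1 → v ≤ 2 * t - 1 → X r O.2 = true) ∧
      (v % 2 = 0 → v ≤ 2 * t - 1 → X r (c (2 * t - 1)) = true) := by
    intro v
    by_cases hv : v ≤ 2 * t - 1
    · by_cases h0 : v = 0
      · exact ⟨O.1, fun _ => rfl, by omega, by omega, by omega, fun _ _ => hM₁X _ hA⟩
      by_cases h1 : v = 2 * t - 1
      · exact ⟨B.1, by omega, fun _ => rfl, fun _ _ => by simpa [h1] using hτB,
          fun _ _ => by rw [← hOB]; exact hM₁X _ hBX, by omega⟩
      rcases Nat.mod_two_eq_zero_or_one v with hp | hp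
      · obtain ⟨r, hr, hd⟩ := hM₁ _ hA (v - 1) (by omega)
        exact ⟨r, by omega, by omega, fun _ _ => by simpa [h1] using hd, by omega, fun _ _ => hr⟩
      · obtain ⟨r, hr, hd⟩ := hM₁ _ hOX (v - 1) (by omega)
        exact ⟨r, by omega, by omega, fun _ _ => by simpa [h1] using hd, fun _ _ => hr, by omega⟩
    · exact ⟨O.1, by omega, by omega, by omega, by omega, by omega⟩
  choose r hr0 hrB hrd hrO hrA using hrow
  have hclt : ∀ u v, u < v → v ≤ 2 * t → (c v).val < (c u).val := by
    intro u v huv hv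
    refine lt_of_scales (f := fun u => (c u).val) (s := fun u => if u = 1 then σ else a (u - 2))
      (m := 2 * t) ?_ ?_ huv hv
    · intro w h1 h2
      simpa [hc0 0 rfl] using hcd w h1 h2
    · intro u v hu huv hv
      by_cases h1 : u = 1
      · simp only [h1, if_true, show v ≠ 1 by omega, if_false]
        rcases Nat.eq_zero_or_pos (v - 2) with h | h
        · rw [h]; exact hσ
        · exact hσ.trans (ha _ _ h (by omega))
      · simpa [h1, show v ≠ 1 by omega] using ha (u - 2) (v - 2) (by omega) (by omega)
  have hrlt : ∀ u v, u < v → v ≤ 2 * t - 1 → (r u).val < (r v).val := by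
    intro u v huv hv
    have : (r v).rev.val < (r u).rev.val := by
      refine lt_of_scales (f := fun u => (r u).rev.val)
        (s := fun u => if u = 2 * t - 1 then τ else b (u - 1)) (m := 2 * t - 1) ?_ ?_ huv hv
      · intro w h1 h2
        simpa [hr0 0 rfl] using hrd w h1 h2
      · intro u v hu huv hv
        have hu' : u ≠ 2 * t - 1 := by omega
        by_cases h1 : v = 2 * t - 1
        · simpa [h1, hu'] using hτ (u - 1) (by omega)
        · simpa [h1, hu'] using hb (u - 1) (v - 1) (by omega) (by omega)
    exact Fin.rev_lt_rev.1 this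
  refine ⟨fun i => r i.val, fun j => c (2 * t - j.val), ?_, ?_, ?_⟩
  · intro i j hij
    exact hrlt i.val j.val hij (by omega)
  · intro i j hij
    have : i.val < j.val := hij
    exact hclt _ _ (by omega) (by omega)
  · rintro ⟨i, hi⟩ ⟨j, hj⟩ h
    simp only [Xpat, XpatN] at h
    rcases h with ⟨h0, h⟩ | ⟨h0, h⟩ | ⟨h0, h⟩ | ⟨h0, h⟩
    · have hi0 : i = 0 := by omega
      simp only [hr0 i hi0]
      rcases h with h | h
      · exact hM₁X _ (hcO (2 * t - j) (by omega) (by omega))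
      · rw [hc0 (2 * t - j) (by omega)]
        exact hM₁X _ hOX
    · simp only [hrB i (by omega)]
      exact hM₁X _ (hcB (2 * t - j) (by omega) (by omega))
    · have hj1 : 2 * t - j = 2 * t - 1 := by omega
      simp only [hj1]
      exact hrA i (by omega) (by omega)
    · simp only [hc0 (2 * t - j) (by omega)]
      exact hrO i (by omega) (by omega)

/-- The quantitative bound: with `L ≥ log₂ n`, a matrix with more than `(4t-1) n L^(4t-3)` ones
contains `X_t`. -/
theorem patContains_of_lt_wt {t n L : ℕ} (ht : 2 ≤ t) (hL : 1 ≤ L) (hn : n ≤ 2 ^ L)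
    (X : Fin n → Fin n → Bool) (hX : (4 * t - 1) * n * L ^ (4 * t - 3) < wt X) :
    PatContains (Xpat t) X := by
  classical
  set M : Finset (Fin n × Fin n) := Finset.univ.filter (fun p => X p.1 p.2 = true) with hM
  set N₁ := n + L ^ (2 * t - 1) * (n + (2 * t - 1) * n) with hN₁
  have hLn : n ≤ L * n := Nat.le_mul_of_pos_left n hL
  have hcardM : L ^ (2 * t - 2) * (N₁ + (2 * t - 2) * n) < M.card := by
    refine lt_of_le_of_lt ?_ hX
    obtain ⟨k, rfl⟩ := Nat.exists_eq_add_of_le ht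
    have e1 : 2 * (2 + k) - 2 = 2 * k + 2 := by omega
    have e2 : 2 * (2 + k) - 1 = 2 * k + 3 := by omega
    have e3 : 4 * (2 + k) - 1 = 4 * k + 7 := by omega
    have e4 : 4 * (2 + k) - 3 = (2 * k + 2) + (2 * k + 3) := by omega
    rw [hN₁, e1, e2, e3, e4, pow_add L (2 * k + 2) (2 * k + 3)]
    have h1 : 1 ≤ L ^ (2 * k + 3) := Nat.one_le_pow _ _ hL
    calc L ^ (2 * k + 2) * (n + L ^ (2 * k + 3) * (n + (2 * k + 3) * n) + (2 * k + 2) * n)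
        = L ^ (2 * k + 2) * (1 * ((2 * k + 3) * n) + L ^ (2 * k + 3) * (n + (2 * k + 3) * n)) := by
          ring
      _ ≤ L ^ (2 * k + 2) * (L ^ (2 * k + 3) * ((2 * k + 3) * n)
            + L ^ (2 * k + 3) * (n + (2 * k + 3) * n)) := by gcongr
      _ = (4 * k + 7) * n * (L ^ (2 * k + 2) * L ^ (2 * k + 3)) := by ring
  -- The column scales.
  have hcolcard : (M.image (fun e => e.2)).card ≤ L * n :=
    (Finset.card_le_univ _).trans (by simpa using hLn)
  obtain ⟨b, M₁, hM₁M, hc₁, hb, hs₁, hsep₁⟩ :=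
    exists_scales (fun e : Fin n × Fin n => e.1.rev.val) (fun e => e.2) (N := N₁) (Q := n) hL
      (2 * t - 2) (M := M) (fun e _ => lt_of_lt_of_le (Fin.is_lt _) hn)
      (fun e _ e' _ hg hx => Prod.ext (Fin.rev_injective (Fin.ext hx)) hg) hcolcard hcardM
  -- The entries with a further entry of `M₁` to their left.
  set xr : Fin n × Fin n → ℕ := fun e => e.2.val with hxr
  set gr : Fin n × Fin n → Fin n := fun e => e.1 with hgr
  have hxr_lt : ∀ e, xr e < 2 ^ L := fun e => lt_of_lt_of_le (Fin.is_lt _) hn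
  set σ := lowScale xr gr M₁ with hσ
  set M₁' := M₁.filter (fun e => ∃ s, HasScale xr gr M₁ e s) with hM₁'
  have hcard' : L ^ (2 * t - 1) * (n + (2 * t - 1) * n) < M₁'.card := by
    have h1 : M₁.card ≤ (M₁.image gr).card + M₁'.card := by
      convert card_le_card_hasScale xr gr (M := M₁) (fun e _ => hxr_lt e)
        (fun e _ e' _ hg hx => Prod.ext hg (Fin.ext hx))
    have h2 : (M₁.image gr).card ≤ n := (Finset.card_le_univ _).trans (by simp)
    omega
  have hkeys : (M₁'.image (fun e => (gr e, σ e))).card ≤ L * n := by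
    have : M₁'.image (fun e => (gr e, σ e)) ⊆ Finset.univ ×ˢ Finset.range L := by
      intro p hp
      obtain ⟨e, he, rfl⟩ := Finset.mem_image.1 hp
      simp only [Finset.mem_product, Finset.mem_univ, true_and, Finset.mem_range]
      exact lowScale_lt_of_lt_two_pow xr gr (hxr_lt e) (Finset.mem_filter.1 he).2
    refine (Finset.card_le_card this).trans ?_
    simp [mul_comm]
  -- The row scales, in the lines given by a row and a lowest scale.
  obtain ⟨a, M₂, hM₂, hc₂, ha, hs₂, -⟩ :=
    exists_scales xr (fun e => (gr e, σ e)) (N := n) (Q := n) hL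
      (2 * t - 1) (M := M₁') (fun e _ => hxr_lt e)
      (fun e _ e' _ hg hx => Prod.ext (Prod.ext_iff.1 hg).1 (Fin.ext hx)) hkeys hcard'
  obtain ⟨O, hO, B, hB, hOB, hlt⟩ : ∃ O ∈ M₂, ∃ B ∈ M₂, B.2 = O.2 ∧ O.1 < B.1 := by
    obtain ⟨e, he, e', he', hne, heq⟩ := Finset.exists_ne_map_eq_of_card_lt_of_maps_to
      (s := M₂) (t := (Finset.univ : Finset (Fin n))) (f := fun e => e.2) (by simpa using hc₂)
      (fun _ _ => Finset.mem_coe.2 (Finset.mem_univ _))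
    rcases lt_trichotomy e.1 e'.1 with h | h | h
    · exact ⟨e, he, e', he', heq.symm, h⟩
    · exact absurd (Prod.ext h heq) hne
    · exact ⟨e', he', e, he, heq, h⟩
  have hM₂₁ : ∀ e ∈ M₂, e ∈ M₁ := fun e he => (Finset.mem_filter.1 (hM₂ he)).1
  obtain ⟨τ, -, hτ⟩ := exists_dyLeft (L := L) (lt_of_lt_of_le (Fin.is_lt O.1.rev) hn)
    (show B.1.rev.val < O.1.rev.val from Fin.rev_lt_rev.2 hlt)
  have hrows : ∀ e ∈ M₂, ∀ i < 2 * t - 1,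
      ∃ c, (e.1, c) ∈ M₁ ∧ DyLeft (a i) c.val e.2.val := by
    intro e he i hi
    obtain ⟨e', he', hg, hd⟩ := hs₂ e he i hi
    refine ⟨e'.2, ?_, hd⟩
    have : e'.1 = e.1 := (Prod.ext_iff.1 hg).1
    rw [← this]
    exact (Finset.mem_filter.1 he').1
  refine patContains_of_scales ht X M₁ (fun e he => (Finset.mem_filter.1 (hM₁M he)).2) a b
    (σ O) τ O B hOB (hM₂₁ O hO) (hM₂₁ B hB) hb ha ?_ ?_ hτ ?_ (hrows O hO) (hrows B hB) ?_
  · obtain ⟨e', he', hg, hd⟩ := hs₂ O hO 0 (by omega)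
    have he'' := Finset.mem_filter.1 he'
    exact lowScale_lt xr gr he''.1 he''.2 (Prod.ext_iff.1 hg).1 (Prod.ext_iff.1 hg).2 hd
  · exact hsep₁ O (hM₂₁ O hO) B (hM₂₁ B hB) hOB τ hτ
  · obtain ⟨e', he', hg, hd⟩ := hasScale_lowScale xr gr (Finset.mem_filter.1 (hM₂ hO)).2
    refine ⟨e'.2, ?_, hd⟩
    have : e'.1 = O.1 := hg
    rw [← this]
    exact he'
  · intro e he i hi
    obtain ⟨e', he', hg, hd⟩ := hs₁ e he i hi
    refine ⟨e'.1, ?_, hd⟩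
    have h2 : e'.2 = e.2 := hg
    rw [← h2]
    exact (Finset.mem_filter.1 he').2

theorem clog_le_three_mul_log {n : ℕ} (hn : 2 ≤ n) : (Nat.clog 2 n : ℝ) ≤ 3 * Real.log n := by
  have hn' : (2 : ℝ) ≤ n := by exact_mod_cast hn
  have hpos : 1 ≤ Nat.clog 2 n := Nat.clog_pos (by norm_num) hn
  have h1 : 2 ^ (Nat.clog 2 n - 1) < n := Nat.pow_pred_clog_lt_self (by norm_num) (by omega)
  have h2 : ((2 : ℝ) ^ (Nat.clog 2 n - 1)) ≤ n := by exact_mod_cast h1.le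
  have h3 := Real.log_le_log (by positivity) h2
  rw [Real.log_pow, Nat.cast_sub hpos, Nat.cast_one] at h3
  have h4 : Real.log 2 ≤ Real.log n := Real.log_le_log (by norm_num) hn'
  have h5 := Real.log_two_gt_d9
  have h6 : (1 : ℝ) ≤ Nat.clog 2 n := by exact_mod_cast hpos
  nlinarith

/-- For every `t ≥ 2` there is `C` such that for all `n ≥ 2`,
`Ex(X_t, n) ≤ C · n · (log n)^(4t−3)`. -/
theorem stmt1 (t : ℕ) (ht : 2 ≤ t) :
    ∃ C : ℝ, ∀ n : ℕ, 2 ≤ n →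
      (matEx (Xpat t) n : ℝ) ≤ C * n * (Real.log n) ^ (4 * t - 3) := by
  refine ⟨(4 * t - 1 : ℕ) * 3 ^ (4 * t - 3), fun n hn => ?_⟩
  have hbound : matEx (Xpat t) n ≤ (4 * t - 1) * n * Nat.clog 2 n ^ (4 * t - 3) := by
    refine csSup_le' ?_
    rintro w ⟨X, hX, rfl⟩
    by_contra hlt
    exact hX (patContains_of_lt_wt ht (Nat.clog_pos (by norm_num) hn)
      (Nat.le_pow_clog (by norm_num) n) X (not_le.1 hlt))
  calc (matEx (Xpat t) n : ℝ)
      ≤ (((4 * t - 1) * n * Nat.clog 2 n ^ (4 * t - 3) : ℕ) : ℝ) := by exact_mod_cast hbound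
    _ = ((4 * t - 1 : ℕ) : ℝ) * n * (Nat.clog 2 n : ℝ) ^ (4 * t - 3) := by push_cast; rfl
    _ ≤ ((4 * t - 1 : ℕ) : ℝ) * n * (3 * Real.log n) ^ (4 * t - 3) := by
        gcongr
        exact clog_le_three_mul_log hn
    _ = (4 * t - 1 : ℕ) * 3 ^ (4 * t - 3) * n * (Real.log n) ^ (4 * t - 3) := by
        rw [mul_pow]; ring
end

section
/- For all integers t ≥ 2 and k ≥ 2, the matrix A_t avoids the pattern X_t; that is, there do not exist rows a_1 < ⋯ < a_{2t} and columns c_1 < ⋯ < c_{2t+1} of A_t such that X_t(i,j) = 1 implies A_t(a_i, c_j) = 1. -/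
/-!
The vector `v[j_1,…,j_t]` determines its sequence `j`, and it is lexicographically larger when
`j` is smaller. Call the first block where two tuples differ their type.

Let `c` and `c'` be the second and the last column of an occurrence of the pattern, `a` and `a'`
its first and last row, and write `c' = a + v[u] = a' + v[w]` and `c = a + v[u₁]`. Let `r` be the
type of the rows (the first place where `u` and `w` differ) and `s` that of the columns (the first
place where `u₁` and `u` differ).

* The columns meet the first and last row alternately. Subtracting `c'`, they become an increasing
  chain of vectors `v[U_i] - v[u]` and `v[W_i] - v[w]` below `0`.
* The rows meet the second and the last column alternately. Reversed, and negated after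
  subtracting `a`, they become an increasing chain of the same kind, with `u₁` in the role of `w`.

In such a chain with base sequences `u < w` (lexicographically), consider a block after the first
place where `u` and `w` differ, on whose predecessors the sequences of the chain agree with the
base sequences. On that block the `U`-differences are `m (e_{p'} - e_p)` and the `W`-differences
`m' (e_{q'} - e_q)`. Here `m < m'`, because `⟨·⟩` is strictly monotone. Such differences cannot
interleave (`eq_of_sandwich`), so all of them vanish on the block, except possibly the lowest of
either kind. Each block thus costs only one index of the chain (`Chain.settled_succ`), and after `t` blocks the top
`U`-element is `0` (`Chain.agree_last`), contradicting strictness of the order.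

It remains to start this induction. If `s < r`, the row chain vanishes before block `r ≥ 1` by
squeezing, which suffices. If `s ≥ r`, the column chain vanishes before block `r` by squeezing,
and block `r` itself, where `m = m'` and `p < q`, is handled by `Chain.settled_first`.
-/


/-- `⟨j_1,…,j_m⟩ = 1 + Σ_{i=1}^m (j_i−1)·k^{m−i}`, the injection `[k]^m → [k^m]`. -/
def ang (k : ℕ) (l : List ℕ) : ℕ := l.foldl (fun acc j => acc * k + (j - 1)) 0 + 1

/-- The vector `v[j_1,…,j_t]`, given by a function `js : ℕ → ℕ` with `js r` being `j_{r+1}`.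
Coordinates are flattened: flat coordinate `i` is coordinate `i % k` (0-indexed) of
block `i / k` (0-indexed).  It is 0 everywhere except at coordinate `j_r` (1-indexed) of
block `r` (1-indexed), where it equals `⟨j_1,…,j_{r−1}⟩`. -/
def vVec (k : ℕ) (js : ℕ → ℕ) (i : ℕ) : ℤ :=
  if i % k + 1 = js (i / k) then (ang k ((List.range (i / k)).map js) : ℤ) else 0

/-- Membership in `I = {1,…,k^t}^{tk}`. -/
def memI (t k : ℕ) (a : Fin (t * k) → ℕ) : Prop := ∀ i, 1 ≤ a i ∧ a i ≤ k ^ t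

/-- Lexicographic (strict) order on tuples. -/
def lexLt {N : ℕ} (a b : Fin N → ℕ) : Prop :=
  ∃ i : Fin N, (∀ j, j < i → a j = b j) ∧ a i < b i

/-- `js` codes an element `(j_1,…,j_t) ∈ [k]^t`. -/
def validJs (t k : ℕ) (js : ℕ → ℕ) : Prop := ∀ r, r < t → 1 ≤ js r ∧ js r ≤ k

/-- The entry `A_t(a,b)` is 1 iff `b − a ∈ S`, i.e. `b − a = v[j_1,…,j_t]` for some
`(j_1,…,j_t) ∈ [k]^t`. -/
def AtOne (t k : ℕ) (a b : Fin (t * k) → ℕ) : Prop :=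
  ∃ js : ℕ → ℕ, validJs t k js ∧
    ∀ i : Fin (t * k), (b i : ℤ) - (a i : ℤ) = vVec k js i.val

/-- `typeOf a b` is the (1-indexed) first block where `a` and `b` differ. -/
noncomputable def typeOf (t k : ℕ) (a b : Fin (t * k) → ℕ) : ℕ :=
  sInf {r | ∃ i : Fin (t * k), i.val / k + 1 = r ∧ a i ≠ b i}

/-! ### Basic notions -/

/-- Non-strict lexicographic comparison of the first `N` coordinates, in the form "at the first
position where `f` and `g` may differ, `f` is at most `g`". -/
def LexLe (N : ℕ) (f g : ℕ → ℤ) : Prop :=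
  ∀ i, i < N → (∀ j, j < i → f j = g j) → f i ≤ g i

/-- The sequences `u` and `v` agree on the first `b` blocks. -/
def Agree (b : ℕ) (u v : ℕ → ℕ) : Prop := ∀ i, i < b → u i = v i

/-- The value `⟨u_1,…,u_b⟩` taken by `v[u]` on (0-indexed) block `b`. -/
def pre (k : ℕ) (u : ℕ → ℕ) (b : ℕ) : ℕ := ang k ((List.range b).map u)

/-- The difference `v[u'] - v[u]`, in flat coordinates. -/
def dv (k : ℕ) (u' u : ℕ → ℕ) (i : ℕ) : ℤ := vVec k u' i - vVec k u i

/-- The difference `m • (e_{p'} - e_p)` of multiples of unit vectors; the position `p` is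
1-indexed and the coordinate `x` is 0-indexed. -/
def eDiff (m : ℤ) (p' p : ℕ) (x : ℕ) : ℤ :=
  (if x + 1 = p' then m else 0) - (if x + 1 = p then m else 0)

/-! ### Lexicographic order inside one block -/

lemma eDiff_self (m : ℤ) (p : ℕ) : eDiff m p p = 0 := by
  funext x; simp [eDiff]

lemma le_of_eDiff_le_zero {k p p' : ℕ} {m : ℤ} (hm : 0 < m) (hp' : 1 ≤ p') (hk' : p' ≤ k)
    (h : LexLe k (eDiff m p' p) 0) : p ≤ p' := by
  by_contra hlt
  have := h (p' - 1) (by omega) (fun j hj => by simp [eDiff]; grind)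
  simp only [eDiff, Pi.zero_apply] at this
  grind

lemma le_of_zero_le_eDiff {k p p' : ℕ} {m : ℤ} (hm : 0 < m) (hp : 1 ≤ p) (hk : p ≤ k)
    (h : LexLe k 0 (eDiff m p' p)) : p' ≤ p := by
  by_contra hlt
  have := h (p - 1) (by omega) (fun j hj => by simp [eDiff]; grind)
  simp only [eDiff, Pi.zero_apply] at this
  grind

/-- The step at the block where the two base sequences first differ: there both carry the same
multiple `m`, at positions `p < q`. -/
lemma eq_of_eDiff_le {k p p' q q' : ℕ} {m : ℤ} (hm : 0 < m) (hp : 1 ≤ p) (hk : p ≤ k)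
    (hpq : p < q) (hpp : p ≤ p') (hqq : q ≤ q')
    (h : LexLe k (eDiff m q' q) (eDiff m p' p)) : p' = p := by
  by_contra hne
  have := h (p - 1) (by omega) (fun j hj => by simp only [eDiff]; grind)
  simp only [eDiff] at this
  grind

/-- The step at a later block: if `m < m'`, a nonzero difference with the larger multiple `m'`
cannot be sandwiched between two differences with the multiple `m`. -/
lemma eq_of_sandwich {k p p' p'' q q' : ℕ} {m m' : ℤ} (hm : 0 < m) (hmm : m < m')
    (hp : 1 ≤ p) (hk : p ≤ k) (hq : 1 ≤ q) (hqk : q ≤ k)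
    (hp' : p ≤ p') (hp'' : p ≤ p'') (hqq : q ≤ q')
    (h₁ : LexLe k (eDiff m p'' p) (eDiff m' q' q))
    (h₂ : LexLe k (eDiff m' q' q) (eDiff m p' p)) : p' = p := by
  by_contra hne
  rcases lt_or_ge p q with hlt | hge
  -- The upper bound is negative at `p`, where the middle term still vanishes.
  · have := h₂ (p - 1) (by omega) (fun j hj => by simp only [eDiff]; grind)
    simp only [eDiff] at this
    grind
  rcases eq_or_lt_of_le hqq with rfl | hq'
  · have := h₂ (p - 1) (by omega) (fun j hj => by simp only [eDiff]; grind)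
    simp only [eDiff] at this
    grind
  -- The middle term is `-m'` at `q ≤ p`, where the lower bound is at least `-m`.
  · have := h₁ (q - 1) (by omega) (fun j hj => by simp only [eDiff]; grind)
    simp only [eDiff] at this
    grind

/-! ### Coordinates of the vectors `v[u]` -/

lemma pre_pos (k : ℕ) (u : ℕ → ℕ) (b : ℕ) : 0 < pre k u b := by simp [pre, ang]

lemma pre_succ (k : ℕ) (u : ℕ → ℕ) (b : ℕ) :
    pre k u (b + 1) = (pre k u b - 1) * k + (u b - 1) + 1 := by
  simp [pre, ang, List.range_succ]

lemma pre_congr {k b : ℕ} {u v : ℕ → ℕ} (h : Agree b u v) : pre k u b = pre k v b := by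
  unfold pre
  congr 1
  exact List.map_congr_left fun i hi => h i (List.mem_range.1 hi)

/-- The encoding `⟨·⟩` is strictly monotone for the lexicographic order. -/
lemma pre_lt {t k f b : ℕ} {u w : ℕ → ℕ} (hu : validJs t k u) (hfw : Agree f u w)
    (hlt : u f < w f) (hfb : f < b) (hbt : b ≤ t) : pre k u b < pre k w b := by
  induction b, hfb using Nat.le_induction with
  | base =>
    have h1 := hu f (by omega)
    rw [pre_succ, pre_succ, pre_congr hfw]
    omega
  | succ b hb ih =>
    have h1 := hu b (by omega)
    have h2 := ih (by omega)
    have h3 := pre_pos k u b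
    rw [pre_succ, pre_succ]
    have h4 : (pre k u b - 1 + 1) * k ≤ (pre k w b - 1) * k := Nat.mul_le_mul_right k (by omega)
    rw [Nat.add_mul] at h4
    omega

lemma vVec_block {k b x : ℕ} (u : ℕ → ℕ) (hx : x < k) :
    vVec k u (b * k + x) = if x + 1 = u b then (pre k u b : ℤ) else 0 := by
  have h1 : (b * k + x) % k = x := by
    rw [Nat.add_comm, Nat.add_mul_mod_self_right, Nat.mod_eq_of_lt hx]
  have h2 : (b * k + x) / k = b := by
    rw [Nat.add_comm, Nat.add_mul_div_right _ _ (by omega), Nat.div_eq_of_lt hx, Nat.zero_add]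
  simp only [vVec, h1, h2, pre]

lemma dv_eq_zero {k b i : ℕ} {u' u : ℕ → ℕ} (h : Agree b u' u) (hi : i < b * k) :
    dv k u' u i = 0 := by
  have hib : i / k < b := Nat.div_lt_of_lt_mul (by rwa [Nat.mul_comm])
  have h1 : pre k u' (i / k) = pre k u (i / k) := pre_congr fun j hj => h j (by omega)
  unfold pre at h1
  simp only [dv, vVec, h _ hib, h1, sub_self]

lemma dv_block {k b x : ℕ} {u' u : ℕ → ℕ} (h : Agree b u' u) (hx : x < k) :
    dv k u' u (b * k + x) = eDiff (pre k u b) (u' b) (u b) x := by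
  simp only [dv, eDiff, vVec_block _ hx, pre_congr h]

lemma agree_of_dv_eq_zero {t k b : ℕ} {u' u : ℕ → ℕ} (hu : validJs t k u) (hb : b ≤ t)
    (h : ∀ i, i < b * k → dv k u' u i = 0) : Agree b u' u := by
  intro j hj
  have h1 := hu j (by omega)
  have h2 : (j + 1) * k ≤ b * k := Nat.mul_le_mul_right k hj
  rw [Nat.add_mul] at h2
  have h3 := h (j * k + (u j - 1)) (by omega)
  have h4 : u j - 1 + 1 = u j := by omega
  have h5 := pre_pos k u j
  rw [dv, vVec_block _ (by omega), vVec_block _ (by omega), h4] at h3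
  by_contra hne
  rw [if_neg (Ne.symm hne), if_pos rfl] at h3
  omega

/-- Two differences that vanish before block `b` are compared there as in `b` itself. -/
lemma LexLe.block {t k b : ℕ} {f g : ℕ → ℤ} (h : LexLe (t * k) f g) (hb : b < t)
    (hf : ∀ i, i < b * k → f i = 0) (hg : ∀ i, i < b * k → g i = 0) :
    LexLe k (fun x => f (b * k + x)) (fun x => g (b * k + x)) := by
  intro i hi hj
  have h2 : (b + 1) * k ≤ t * k := Nat.mul_le_mul_right k hb
  rw [Nat.add_mul] at h2
  refine h (b * k + i) (by omega) fun j hji => ?_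
  rcases lt_or_ge j (b * k) with hlt | hge
  · rw [hf j hlt, hg j hlt]
  · have := hj (j - b * k) (by omega)
    simpa only [Nat.add_sub_cancel' hge] using this

lemma LexLe.congr {N : ℕ} {f g f' g' : ℕ → ℤ} (h : LexLe N f g)
    (hf : ∀ i, i < N → f i = f' i) (hg : ∀ i, i < N → g i = g' i) : LexLe N f' g' := by
  intro i hi hj
  rw [← hf i hi, ← hg i hi]
  exact h i hi fun j hji => by rw [hf j (by omega), hg j (by omega), hj j hji]

/-- Block comparison for two differences `v[u'] - v[u]`, `v[w'] - v[w]`. -/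
lemma LexLe.dv_dv {t k b : ℕ} {u' u w' w : ℕ → ℕ}
    (h : LexLe (t * k) (dv k u' u) (dv k w' w)) (hb : b < t)
    (hu : Agree b u' u) (hw : Agree b w' w) :
    LexLe k (eDiff (pre k u b) (u' b) (u b)) (eDiff (pre k w b) (w' b) (w b)) :=
  (h.block hb (fun _ => dv_eq_zero hu) (fun _ => dv_eq_zero hw)).congr
    (fun _ => dv_block hu) (fun _ => dv_block hw)

/-- A difference at most `0` has its first nonzero block shifted to a larger position. -/
lemma le_of_dv_le_zero {t k b : ℕ} {u' u : ℕ → ℕ} (hu' : validJs t k u')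
    (h : LexLe (t * k) (dv k u' u) 0) (hb : b < t) (hu : Agree b u' u) : u b ≤ u' b := by
  have h1 : LexLe k (eDiff (pre k u b) (u' b) (u b)) 0 :=
    (h.block hb (fun _ => dv_eq_zero hu) (fun _ _ => rfl)).congr
      (fun _ => dv_block hu) (fun _ _ => rfl)
  exact le_of_eDiff_le_zero (by exact_mod_cast pre_pos k u b) (hu' b hb).1 (hu' b hb).2 h1

lemma LexLe.eq_zero_of_le {N M : ℕ} {f g : ℕ → ℤ} (hfg : LexLe N f g) (hg : LexLe N g 0)
    (hM : M ≤ N) (hf : ∀ i, i < M → f i = 0) : ∀ i, i < M → g i = 0 := by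
  intro i
  induction i using Nat.strong_induction_on with
  | _ i ih =>
    intro hi
    have h1 := hg i (by omega) fun j hj => ih j hj (by omega)
    have h2 := hfg i (by omega) fun j hj => by rw [hf j (by omega), ih j hj (by omega)]
    rw [hf i hi] at h2
    exact le_antisymm h1 h2

/-! ### Interleaved chains -/

/-- A chain `x_1 ≤ y_2 ≤ x_2 ≤ ⋯ ≤ y_t ≤ x_t ≤ 0` in the lexicographic order, where
`x_i = v[U_i] - v[u]` and `y_i = v[W_i] - v[w]`. -/
structure Chain (t k : ℕ) (u w : ℕ → ℕ) (U W : ℕ → ℕ → ℕ) : Prop where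
  hu : validJs t k u
  hw : validJs t k w
  hU : ∀ i, 1 ≤ i → i ≤ t → validJs t k (U i)
  hW : ∀ i, 2 ≤ i → i ≤ t → validJs t k (W i)
  UW : ∀ i, 1 ≤ i → i < t → LexLe (t * k) (dv k (U i) u) (dv k (W (i + 1)) w)
  WU : ∀ i, 2 ≤ i → i ≤ t → LexLe (t * k) (dv k (W i) w) (dv k (U i) u)
  U0 : ∀ i, 1 ≤ i → i ≤ t → LexLe (t * k) (dv k (U i) u) 0
  W0 : ∀ i, 2 ≤ i → i ≤ t → LexLe (t * k) (dv k (W i) w) 0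

/-- From index `j` on, the sequences of a chain agree with their base sequences on the first
`j` blocks. -/
def Settled (t : ℕ) (u w : ℕ → ℕ) (U W : ℕ → ℕ → ℕ) (j : ℕ) : Prop :=
  (∀ i, j ≤ i → 1 ≤ i → i ≤ t → Agree j (U i) u) ∧
  (∀ i, j + 1 ≤ i → 2 ≤ i → i ≤ t → Agree j (W i) w)

lemma Agree.succ {b : ℕ} {u v : ℕ → ℕ} (h : Agree b u v) (hb : u b = v b) :
    Agree (b + 1) u v := by
  intro i hi
  rcases Nat.lt_succ_iff_lt_or_eq.1 hi with h' | rfl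
  · exact h i h'
  · exact hb

/-- If `v[u'] - v[u] ≤ v[w'] - v[w] ≤ 0` and the first difference vanishes on block `b`, then so
does the second. -/
lemma eq_of_dv_le {t k b : ℕ} {u' u w' w : ℕ → ℕ} (hw : validJs t k w)
    (hw' : validJs t k w') (h0 : LexLe (t * k) (dv k w' w) 0)
    (h : LexLe (t * k) (dv k u' u) (dv k w' w)) (hb : b < t)
    (hub : Agree b u' u) (hwb : Agree b w' w) (heq : u' b = u b) : w' b = w b := by
  have h1 := h.dv_dv hb hub hwb
  rw [heq, eDiff_self] at h1
  exact le_antisymm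
    (le_of_zero_le_eDiff (by exact_mod_cast pre_pos k w b) (hw b hb).1 (hw b hb).2 h1)
    (le_of_dv_le_zero hw' h0 hb hwb)

/-- If the lowest element `x_1` of a chain vanishes on the first `r` blocks, then so does everything
squeezed between it and `0`. -/
lemma Chain.settled_of_agree {t k r : ℕ} {u w : ℕ → ℕ} {U W : ℕ → ℕ → ℕ}
    (C : Chain t k u w U W) (hrt : r ≤ t) (h : Agree r (U 1) u) :
    Settled t u w U W r := by
  have hM : r * k ≤ t * k := Nat.mul_le_mul_right k hrt
  have hz : ∀ i, 1 ≤ i → i ≤ t → ∀ x, x < r * k → dv k (U i) u x = 0 := by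
    intro i hi
    induction i, hi using Nat.le_induction with
    | base => exact fun _ x => dv_eq_zero h
    | succ i hi ih =>
      intro hit
      exact (C.WU (i + 1) (by omega) hit).eq_zero_of_le (C.U0 (i + 1) (by omega) hit) hM
        ((C.UW i hi (by omega)).eq_zero_of_le (C.W0 (i + 1) (by omega) hit) hM
          (ih (by omega)))
  refine ⟨fun i _ hi hit => agree_of_dv_eq_zero C.hu hrt (hz i hi hit), fun i _ hi hit => ?_⟩
  obtain ⟨i, rfl⟩ : ∃ j, i = j + 1 := ⟨i - 1, by omega⟩
  exact agree_of_dv_eq_zero C.hw hrt ((C.UW i (by omega) (by omega)).eq_zero_of_le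
    (C.W0 (i + 1) (by omega) hit) hM (hz i (by omega) (by omega)))

/-- Wherever `m < m'`, settling one more block costs one index: the sandwich `x_j ≤ y_{j+1} ≤
x_{j+1}` makes `x_{j+1}` vanish on block `j`, and with it everything above. -/
lemma Chain.settled_succ {t k j : ℕ} {u w : ℕ → ℕ} {U W : ℕ → ℕ → ℕ}
    (C : Chain t k u w U W) (hj : 1 ≤ j) (hjt : j < t) (hm : pre k u j < pre k w j)
    (h : Settled t u w U W j) : Settled t u w U W (j + 1) := by
  obtain ⟨hU, hW⟩ := h
  have key : ∀ i, j + 1 ≤ i → i ≤ t → U i j = u j := by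
    intro i hi hit
    obtain ⟨i, rfl⟩ : ∃ l, i = l + 1 := ⟨i - 1, by omega⟩
    have a1 := hU i (by omega) (by omega) (by omega)
    have a2 := hW (i + 1) (by omega) (by omega) hit
    have a3 := hU (i + 1) (by omega) (by omega) hit
    exact eq_of_sandwich (by exact_mod_cast pre_pos k u j) (by exact_mod_cast hm)
      (C.hu j hjt).1 (C.hu j hjt).2 (C.hw j hjt).1 (C.hw j hjt).2
      (le_of_dv_le_zero (C.hU _ (by omega) hit) (C.U0 _ (by omega) hit) hjt a3)
      (le_of_dv_le_zero (C.hU i (by omega) (by omega)) (C.U0 i (by omega) (by omega)) hjt a1)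
      (le_of_dv_le_zero (C.hW _ (by omega) hit) (C.W0 _ (by omega) hit) hjt a2)
      ((C.UW i (by omega) (by omega)).dv_dv hjt a1 a2)
      ((C.WU (i + 1) (by omega) hit).dv_dv hjt a2 a3)
  refine ⟨fun i hi h1 hit => (hU i (by omega) h1 hit).succ (key i hi hit),
    fun i hi h2 hit => ?_⟩
  obtain ⟨i, rfl⟩ : ∃ l, i = l + 1 := ⟨i - 1, by omega⟩
  have a2 := hW (i + 1) (by omega) h2 hit
  exact a2.succ (eq_of_dv_le C.hw (C.hW _ h2 hit) (C.W0 _ h2 hit) (C.UW i (by omega) (by omega))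
    hjt (hU i (by omega) (by omega) (by omega)) a2 (key i (by omega) (by omega)))

/-- If the two base sequences first differ at block `f`, with `u_f < w_f`, then a chain settled
at some `j > f` has `U_t = u`: every further block settles one more index. -/
lemma Chain.agree_last {t k f j : ℕ} {u w : ℕ → ℕ} {U W : ℕ → ℕ → ℕ}
    (C : Chain t k u w U W) (hf : Agree f u w) (hlt : u f < w f) (hfj : f < j) (hjt : j ≤ t)
    (h : Settled t u w U W j) : Agree t (U t) u := by
  have : ∀ l, j ≤ l → l ≤ t → Settled t u w U W l := by
    intro l hl
    induction l, hl using Nat.le_induction with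
    | base => exact fun _ => h
    | succ l hl ih =>
      intro hlt'
      exact C.settled_succ (by omega) hlt' (pre_lt C.hu hf hlt (by omega) (by omega))
        (ih (by omega))
  exact (this t hjt le_rfl).1 t le_rfl (by omega) le_rfl

/-- The step at the block `r` where the base sequences first differ. The extra element `y_1`
at the bottom of the chain makes it valid for `r = 0` too. -/
lemma Chain.settled_first {t k r : ℕ} {u w : ℕ → ℕ} {U W : ℕ → ℕ → ℕ}
    (C : Chain t k u w U W) (hrt : r < t) (hW1 : validJs t k (W 1))
    (hW10 : LexLe (t * k) (dv k (W 1) w) 0)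
    (hWU1 : LexLe (t * k) (dv k (W 1) w) (dv k (U 1) u))
    (hr : Agree r u w) (hlt : u r < w r)
    (h : Settled t u w U W r) : Settled t u w U W (r + 1) := by
  obtain ⟨hU, hW⟩ := h
  have hm : (0 : ℤ) < pre k u r := by exact_mod_cast pre_pos k u r
  have aW : ∀ i, r + 1 ≤ i → i ≤ t → Agree r (W i) w := by
    intro i hi hit
    rcases Nat.lt_or_ge i 2 with h2 | h2
    · intro x hx
      omega
    · exact hW i hi h2 hit
  have hW' : ∀ i, 1 ≤ i → i ≤ t → validJs t k (W i) ∧ LexLe (t * k) (dv k (W i) w) 0 ∧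
      LexLe (t * k) (dv k (W i) w) (dv k (U i) u) := by
    intro i hi hit
    rcases eq_or_lt_of_le hi with rfl | h2
    · exact ⟨hW1, hW10, hWU1⟩
    · exact ⟨C.hW i h2 hit, C.W0 i h2 hit, C.WU i h2 hit⟩
  have key : ∀ i, r + 1 ≤ i → i ≤ t → U i r = u r := by
    intro i hi hit
    obtain ⟨b1, b2, b3⟩ := hW' i (by omega) hit
    have a1 := hU i (by omega) (by omega) hit
    have a2 := aW i hi hit
    have h1 := b3.dv_dv hrt a2 a1
    rw [← pre_congr hr] at h1
    exact eq_of_eDiff_le hm (C.hu r hrt).1 (C.hu r hrt).2 hlt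
      (le_of_dv_le_zero (C.hU _ (by omega) hit) (C.U0 _ (by omega) hit) hrt a1)
      (le_of_dv_le_zero b1 b2 hrt a2) h1
  refine ⟨fun i hi h1 hit => (hU i (by omega) h1 hit).succ (key i hi hit),
    fun i hi h2 hit => ?_⟩
  obtain ⟨i, rfl⟩ : ∃ l, i = l + 1 := ⟨i - 1, by omega⟩
  have a2 := hW (i + 1) (by omega) h2 hit
  exact a2.succ (eq_of_dv_le C.hw (C.hW _ h2 hit) (C.W0 _ h2 hit) (C.UW i (by omega) (by omega))
    hrt (hU i (by omega) (by omega) (by omega)) a2 (key i (by omega) (by omega)))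

/-! ### Rows and columns of the matrix -/

/-- Lexicographic order of tuples, transferred to integer functions with the same differences. -/
lemma lexLe_of_lexLt {N : ℕ} {x y : Fin N → ℕ} {f g : ℕ → ℤ} (h : lexLt x y)
    (hfg : ∀ i : Fin N, g i - f i = (y i : ℤ) - x i) : LexLe N f g := by
  obtain ⟨i, hi, hlt⟩ := h
  intro l hl hj
  have h1 := hfg ⟨l, hl⟩
  rcases lt_trichotomy l i.val with h | h | h
  · rw [hi ⟨l, hl⟩ h] at h1
    simp only at h1
    omega
  · obtain rfl : (⟨l, hl⟩ : Fin N) = i := Fin.ext h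
    simp only at h1
    omega
  · have h2 := hj i h
    have h3 := hfg i
    omega

/-- Two distinct entries in the same row or column come from distinct sequences. -/
lemma not_agree_of_lexLt {t k : ℕ} {x y : Fin (t * k) → ℕ} {u' u : ℕ → ℕ} (h : lexLt x y)
    (hd : ∀ i : Fin (t * k), dv k u' u i = (x i : ℤ) - y i) : ¬ Agree t u' u := by
  intro ha
  obtain ⟨i, -, hlt⟩ := h
  have h1 := hd i
  rw [dv_eq_zero ha i.isLt] at h1
  omega

lemma exists_first_ne {t : ℕ} {u w : ℕ → ℕ} (h : ¬ Agree t u w) :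
    ∃ r, r < t ∧ Agree r u w ∧ u r ≠ w r := by
  classical
  have h' : ∃ r, r < t ∧ u r ≠ w r := by
    simpa only [Agree, not_forall, exists_prop] using h
  refine ⟨Nat.find h', (Nat.find_spec h').1, fun i hi => ?_, (Nat.find_spec h').2⟩
  by_contra hne
  exact Nat.find_min h' hi ⟨hi.trans (Nat.find_spec h').1, hne⟩

lemma Agree.symm {b : ℕ} {u v : ℕ → ℕ} (h : Agree b u v) : Agree b v u :=
  fun i hi => (h i hi).symm

/-- The matrix `A_t` avoids the pattern `X_t`: there are no rows
`a 0 < ⋯ < a (2t−1)` and columns `c 0 < ⋯ < c (2t)` in `I` such that every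
1-entry of `X_t` maps to a 1-entry of `A_t`. -/
theorem stmt12 (t k : ℕ) (ht : 2 ≤ t) (hk : 2 ≤ k) :
    ¬ ∃ (a : Fin (2 * t) → Fin (t * k) → ℕ) (c : Fin (2 * t + 1) → Fin (t * k) → ℕ),
      (∀ i, memI t k (a i)) ∧ (∀ j, memI t k (c j)) ∧
      (∀ i j : Fin (2 * t), i < j → lexLt (a i) (a j)) ∧
      (∀ i j : Fin (2 * t + 1), i < j → lexLt (c i) (c j)) ∧
      (∀ (i : Fin (2 * t)) (j : Fin (2 * t + 1)),
        XpatN t i.val j.val → AtOne t k (a i) (c j)) := by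
  rintro ⟨a, c, -, -, ha, hc, hX⟩
  -- Extend the families to all of `ℕ`, with junk values outside the range.
  obtain ⟨a', ha'⟩ : ∃ a' : ℕ → Fin (t * k) → ℕ, ∀ i : Fin (2 * t), a' i = a i :=
    ⟨fun n => if h : n < 2 * t then a ⟨n, h⟩ else 0, fun i => by simp⟩
  obtain ⟨c', hc'⟩ : ∃ c' : ℕ → Fin (t * k) → ℕ, ∀ i : Fin (2 * t + 1), c' i = c i :=
    ⟨fun n => if h : n < 2 * t + 1 then c ⟨n, h⟩ else 0, fun i => by simp [i.isLt]⟩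
  have ha : ∀ i j, i < j → j < 2 * t → lexLt (a' i) (a' j) := by
    intro i j hij hj
    have := ha ⟨i, by omega⟩ ⟨j, hj⟩ hij
    rwa [← ha', ← ha'] at this
  have hc : ∀ i j, i < j → j < 2 * t + 1 → lexLt (c' i) (c' j) := by
    intro i j hij hj
    have := hc ⟨i, by omega⟩ ⟨j, hj⟩ hij
    rwa [← hc', ← hc'] at this
  have hX : ∀ i j, XpatN t i j → i < 2 * t → j < 2 * t + 1 → ∃ js : ℕ → ℕ, validJs t k js ∧
      ∀ l : Fin (t * k), (c' j l : ℤ) - (a' i l : ℤ) = vVec k js l.val := by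
    intro i j h hi hj
    have := hX ⟨i, hi⟩ ⟨j, hj⟩ h
    rwa [← ha', ← hc'] at this
  obtain ⟨u, hu, eu⟩ := hX 0 (2 * t) (by unfold XpatN; omega) (by omega) (by omega)
  have exU : ∀ i, ∃ js : ℕ → ℕ, 1 ≤ i → i ≤ t → validJs t k js ∧
      ∀ l : Fin (t * k), (c' (2 * i - 1) l : ℤ) - (a' 0 l : ℤ) = vVec k js l.val := by
    intro i
    by_cases hi : 1 ≤ i ∧ i ≤ t
    · obtain ⟨js, h⟩ := hX 0 (2 * i - 1) (by unfold XpatN; omega) (by omega) (by omega)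
      exact ⟨js, fun _ _ => h⟩
    · exact ⟨0, fun h1 h2 => absurd ⟨h1, h2⟩ hi⟩
  have exW : ∀ i, ∃ js : ℕ → ℕ, 1 ≤ i → i ≤ t → validJs t k js ∧
      ∀ l : Fin (t * k), (c' (2 * i - 2) l : ℤ) - (a' (2 * t - 1) l : ℤ) = vVec k js l.val := by
    intro i
    by_cases hi : 1 ≤ i ∧ i ≤ t
    · obtain ⟨js, h⟩ := hX (2 * t - 1) (2 * i - 2) (by unfold XpatN; omega) (by omega) (by omega)
      exact ⟨js, fun _ _ => h⟩
    · exact ⟨0, fun h1 h2 => absurd ⟨h1, h2⟩ hi⟩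
  have exZ : ∀ i, ∃ js : ℕ → ℕ, 1 ≤ i → i ≤ t → validJs t k js ∧
      ∀ l : Fin (t * k), (c' (2 * t) l : ℤ) - (a' (2 * t + 1 - 2 * i) l : ℤ) = vVec k js l.val := by
    intro i
    by_cases hi : 1 ≤ i ∧ i ≤ t
    · obtain ⟨js, h⟩ := hX (2 * t + 1 - 2 * i) (2 * t) (by unfold XpatN; omega) (by omega)
        (by omega)
      exact ⟨js, fun _ _ => h⟩
    · exact ⟨0, fun h1 h2 => absurd ⟨h1, h2⟩ hi⟩
  have exY : ∀ i, ∃ js : ℕ → ℕ, 2 ≤ i → i ≤ t → validJs t k js ∧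
      ∀ l : Fin (t * k), (c' 1 l : ℤ) - (a' (2 * t + 2 - 2 * i) l : ℤ) = vVec k js l.val := by
    intro i
    by_cases hi : 2 ≤ i ∧ i ≤ t
    · obtain ⟨js, h⟩ := hX (2 * t + 2 - 2 * i) 1 (by unfold XpatN; omega) (by omega) (by omega)
      exact ⟨js, fun _ _ => h⟩
    · exact ⟨0, fun h1 h2 => absurd ⟨h1, h2⟩ hi⟩
  choose U hU using exU
  choose W hW using exW
  choose Z hZ using exZ
  choose Y hY using exY
  have hw := (hZ 1 le_rfl (by omega)).1
  have ew : ∀ l : Fin (t * k),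
      (c' (2 * t) l : ℤ) - (a' (2 * t - 1) l : ℤ) = vVec k (Z 1) l.val :=
    (hZ 1 le_rfl (by omega)).2
  -- Columns below the last one, in the first and the last row.
  have dU : ∀ i, 1 ≤ i → i ≤ t → ∀ l : Fin (t * k),
      dv k (U i) u l = (c' (2 * i - 1) l : ℤ) - c' (2 * t) l := by
    intro i h1 h2 l
    rw [dv, ← eu l, ← (hU i h1 h2).2 l]; ring
  have dW : ∀ i, 1 ≤ i → i ≤ t → ∀ l : Fin (t * k),
      dv k (W i) (Z 1) l = (c' (2 * i - 2) l : ℤ) - c' (2 * t) l := by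
    intro i h1 h2 l
    rw [dv, ← ew l, ← (hW i h1 h2).2 l]; ring
  -- Rows above the first one, in the last and the second column, in reversed order.
  have dZ : ∀ i, 1 ≤ i → i ≤ t → ∀ l : Fin (t * k),
      dv k (Z i) u l = (a' 0 l : ℤ) - a' (2 * t + 1 - 2 * i) l := by
    intro i h1 h2 l
    rw [dv, ← eu l, ← (hZ i h1 h2).2 l]; ring
  have dY : ∀ i, 2 ≤ i → i ≤ t → ∀ l : Fin (t * k),
      dv k (Y i) (U 1) l = (a' 0 l : ℤ) - a' (2 * t + 2 - 2 * i) l := by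
    intro i h1 h2 l
    rw [dv, ← (hU 1 le_rfl (by omega)).2 l, ← (hY i h1 h2).2 l]; ring
  have hWU : ∀ i, 1 ≤ i → i ≤ t →
      LexLe (t * k) (dv k (W i) (Z 1)) (dv k (U i) u) := fun i h1 h2 =>
    lexLe_of_lexLt (hc (2 * i - 2) (2 * i - 1) (by omega) (by omega)) fun l => by
      rw [dU i h1 h2, dW i h1 h2]; ring
  have hW0 : ∀ i, 1 ≤ i → i ≤ t → LexLe (t * k) (dv k (W i) (Z 1)) 0 := fun i h1 h2 =>
    lexLe_of_lexLt (hc (2 * i - 2) (2 * t) (by omega) (by omega)) fun l => by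
      rw [dW i h1 h2]; simp
  have C₁ : Chain t k u (Z 1) U W :=
    { hu := hu
      hw := hw
      hU := fun i h1 h2 => (hU i h1 h2).1
      hW := fun i h1 h2 => (hW i (by omega) h2).1
      UW := fun i h1 h2 =>
        lexLe_of_lexLt (hc (2 * i - 1) (2 * (i + 1) - 2) (by omega) (by omega)) fun l => by
          rw [dU i h1 (by omega), dW (i + 1) (by omega) h2]; ring
      WU := fun i h1 h2 => hWU i (by omega) h2
      U0 := fun i h1 h2 =>
        lexLe_of_lexLt (hc (2 * i - 1) (2 * t) (by omega) (by omega)) fun l => by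
          rw [dU i h1 h2]; simp
      W0 := fun i h1 h2 => hW0 i (by omega) h2 }
  have C₂ : Chain t k u (U 1) Z Y :=
    { hu := hu
      hw := (hU 1 le_rfl (by omega)).1
      hU := fun i h1 h2 => (hZ i h1 h2).1
      hW := fun i h1 h2 => (hY i h1 h2).1
      UW := fun i h1 h2 =>
        lexLe_of_lexLt (ha (2 * t + 2 - 2 * (i + 1)) (2 * t + 1 - 2 * i) (by omega) (by omega))
          fun l => by
            rw [dZ i h1 (by omega), dY (i + 1) (by omega) h2]; ring
      WU := fun i h1 h2 =>
        lexLe_of_lexLt (ha (2 * t + 1 - 2 * i) (2 * t + 2 - 2 * i) (by omega) (by omega))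
          fun l => by
            rw [dZ i (by omega) h2, dY i h1 h2]; ring
      U0 := fun i h1 h2 =>
        lexLe_of_lexLt (ha 0 (2 * t + 1 - 2 * i) (by omega) (by omega)) fun l => by
          rw [dZ i h1 h2]; simp
      W0 := fun i h1 h2 =>
        lexLe_of_lexLt (ha 0 (2 * t + 2 - 2 * i) (by omega) (by omega)) fun l => by
          rw [dY i h1 h2]; simp }
  have nZ : ∀ i, 1 ≤ i → i ≤ t → ¬ Agree t (Z i) u := fun i h1 h2 =>
    not_agree_of_lexLt (ha 0 (2 * t + 1 - 2 * i) (by omega) (by omega)) (dZ i h1 h2)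
  have nU : ∀ i, 1 ≤ i → i ≤ t → ¬ Agree t (U i) u := fun i h1 h2 =>
    not_agree_of_lexLt (hc (2 * i - 1) (2 * t) (by omega) (by omega)) (dU i h1 h2)
  -- `r` is the type of the pair formed by the first and the last row.
  obtain ⟨r, hrt, hr, hne⟩ := exists_first_ne (nZ 1 le_rfl (by omega))
  have hlt : u r < Z 1 r :=
    lt_of_le_of_ne (le_of_dv_le_zero hw (C₂.U0 1 le_rfl (by omega)) hrt hr) hne.symm
  by_cases hs : Agree r (U 1) u
  · exact nU t (by omega) le_rfl (C₁.agree_last hr.symm hlt (Nat.lt_succ_self r) hrt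
      (C₁.settled_first hrt (hW 1 le_rfl (by omega)).1 (hW0 1 le_rfl (by omega))
        (hWU 1 le_rfl (by omega)) hr.symm hlt
        (C₁.settled_of_agree hrt.le hs)))
  -- `s < r` is the type of the pair formed by the second and the last column.
  · obtain ⟨s, hsr, hsa, hsne⟩ := exists_first_ne hs
    have hslt : u s < U 1 s :=
      lt_of_le_of_ne (le_of_dv_le_zero (hU 1 le_rfl (by omega)).1 (C₁.U0 1 le_rfl (by omega))
        (by omega) hsa) hsne.symm
    exact nZ t (by omega) le_rfl (C₂.agree_last hsa.symm hslt hsr hrt.le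
      (C₂.settled_of_agree hrt.le hr))
end

section
/- For every integer t ≥ 2, let H_t be the ordered bipartite vertex-ordered graph on {1,…,4t+1} with parts {1,…,2t} and {2t+1,…,4t+1} whose bipartite adjacency matrix is X_t. Then there exist a constant c > 0 and an integer n₀ such that for all n ≥ n₀, Ex(H_t, n) ≥ c · n · (log n / log log n)^t. -/
/-- Ordered containment of vertex-ordered graphs: a strictly increasing map
carrying edges to edges. -/
def OContains {m n : ℕ} (H : SimpleGraph (Fin m)) (G : SimpleGraph (Fin n)) : Prop :=
  ∃ f : Fin m → Fin n, StrictMono f ∧ ∀ i j, H.Adj i j → G.Adj (f i) (f j)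

/-- `oex H n` is the maximum number of edges of a vertex-ordered graph on `n` vertices
that does not contain `H`. -/
noncomputable def oex {m : ℕ} (H : SimpleGraph (Fin m)) (n : ℕ) : ℕ :=
  sSup {w | ∃ G : SimpleGraph (Fin n), ¬ OContains H G ∧ G.edgeSet.ncard = w}

/-- The vertex-ordered graph `H_t` on `{1,…,4t+1}` with parts `{1,…,2t}` and
`{2t+1,…,4t+1}` whose bipartite adjacency matrix is `X_t`. -/
def Hgraph (t : ℕ) : SimpleGraph (Fin (4 * t + 1)) :=
  SimpleGraph.fromRel (fun i j =>
    i.val < 2 * t ∧ 2 * t ≤ j.val ∧ XpatN t i.val (j.val - 2 * t))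

/-!
The extremal graph joins two vertices exactly when their difference lies in a set `D` of `m ^ t`
positive integers, where `m` is of order `log n / log log n`. An element of `D` is attached to a
sequence `x 0, …, x (t - 1)` of elements of `Fin m`: it has `t` nonzero digits in a base polynomial
in `m`, the `k`-th of them sits at a place determined by `k` and `x k` (smaller `k` being more
significant), and its digit is an injective code of the prefix `x 0, …, x (k - 1)`. The elements
of `D` are below `base ^ (t * m)`, which is at most `n`, so there are at least `n / 2 * m ^ t` edges.

If `x` and `x'` first differ at depth `k` and `x` is larger, then `val x - val x'` is dominated by
the `k`-th term of `x` (`near_sub`), and this term determines the whole prefix `x 0, …, x k`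
(`agree_of_term_eq`). Thus comparing differences compares such terms (`Near.term_le`), and a
difference attached to `y` that is sandwiched between two differences attached to `x` with the same
dominating term forces `x` and `y` to share a prefix.

Suppose that the pattern `X_t` occurs, with `x` and `y` the differences at its first and last entries
in the last column, and `x₁` the difference in the first row and second column. Let `s` be the depth
at which `x` and `y` first differ and `a` the depth at which `x` and `x₁` first differ. The columns
alternate between the first and the last row, which gives `t` differences attached to `x`
interleaved with differences attached to `y`. If `s ≤ a`, the depths of the former must be strictly
monotone, so they are all of `0, …, t - 1` and `s = a = 0`. In the same way the rows alternate
between the last and the second column, and `a ≤ s` implies `s = a = 0`. But then the first two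
columns give a difference attached to `y` whose dominating term has depth `0` and is at least the one
of `x`, which contradicts `y 0 < x 0`. This is `no_pattern`.
-/

namespace Xt

variable {t m : ℕ}

/-! ### The set of differences -/

/-- The exponent of the base used by the value `p` at depth `k`. The exponents are split into `t`
consecutive blocks of length `m`, one for each depth, smaller depths having larger exponents. -/
def pos (k : Fin t) (p : Fin m) : ℕ := (t - 1 - k) * m + p

/-- An injective encoding, by an integer in `[1, m ^ t]`, of the prefix `x 0, …, x (k - 1)`. -/
def code [NeZero m] (x : Fin t → Fin m) (k : Fin t) : ℕ :=
  (finFunctionFinEquiv (fun j => if j < k then x j else 0) : ℕ) + 1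

/-- The base of the number system. It exceeds the largest possible sum of `2 * t` digits. -/
def base (t m : ℕ) : ℕ := 2 * t * m ^ t + 1

/-- The contribution of depth `k` to the integer attached to `x`. It determines `k` and
the values `x 0, …, x k`. -/
def term [NeZero m] (x : Fin t → Fin m) (k : Fin t) : ℕ := code x k * base t m ^ pos k (x k)

/-- The integer attached to the sequence `x`. These are the differences `c - r` at which the
extremal graph has an edge `{r, c}`. -/
def val [NeZero m] (x : Fin t → Fin m) : ℕ := ∑ k, term x k

/-- `δ` is within `base ^ pos k (x k) / 2` of `term x k`. -/
def Near [NeZero m] (δ : ℤ) (x : Fin t → Fin m) (k : Fin t) : Prop :=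
  (base t m : ℤ) ^ pos k (x k) * (2 * code x k - 1) < 2 * δ ∧
    2 * δ < (base t m : ℤ) ^ pos k (x k) * (2 * code x k + 1)

lemma base_pos : 0 < base t m := by simp [base]

lemma lt_base (k : Fin t) : 2 * m ^ t + 1 ≤ base t m := by
  have h1 : 1 ≤ t := by have := k.2; omega
  unfold base
  have := Nat.mul_le_mul_right (2 * m ^ t) h1
  nlinarith

/-- Exponents of smaller depth are larger. -/
lemma depth_le_of_pos_le {k l : Fin t} {p q : Fin m} (h : pos k p ≤ pos l q) : l ≤ k := by
  by_contra! hkl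
  have hq := q.2
  have hl := l.2
  have hkl' : (k : ℕ) < l := hkl
  have h1 : (t - 1 - l + 1) * m ≤ (t - 1 - k) * m := Nat.mul_le_mul_right _ (by omega)
  unfold pos at h
  rw [add_mul] at h1
  omega

lemma pos_inj {k l : Fin t} {p q : Fin m} (h : pos k p = pos l q) : k = l ∧ p = q := by
  obtain rfl : k = l := le_antisymm (depth_le_of_pos_le h.ge) (depth_le_of_pos_le h.le)
  refine ⟨rfl, Fin.ext ?_⟩
  unfold pos at h
  omega

lemma exists_first_ne {x y : Fin t → Fin m} (h : x ≠ y) :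
    ∃ k, (∀ j < k, x j = y j) ∧ x k ≠ y k := by
  obtain ⟨k, hk, hmin⟩ := WellFounded.has_min (wellFounded_lt (α := Fin t)) {k | x k ≠ y k}
    (Function.ne_iff.1 h)
  exact ⟨k, fun j hj => by_contra fun hne => hmin j hne hj, hk⟩

variable [NeZero m]

lemma code_pos (x : Fin t → Fin m) (k : Fin t) : 1 ≤ code x k := by simp [code]

lemma code_le (x : Fin t → Fin m) (k : Fin t) : code x k ≤ m ^ t := by
  unfold code
  exact (finFunctionFinEquiv (fun j => if j < k then x j else 0)).2

lemma code_eq_iff (x y : Fin t → Fin m) (k : Fin t) :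
    code x k = code y k ↔ ∀ j < k, x j = y j := by
  unfold code
  rw [Nat.add_right_cancel_iff, Fin.val_inj, EmbeddingLike.apply_eq_iff_eq]
  constructor
  · intro h j hj
    simpa [hj] using congrFun h j
  · intro h
    funext j
    by_cases hj : j < k
    · simp [hj, h j hj]
    · simp [hj]

/-- A term with a small exponent is small. -/
lemma term_le_of_pos_lt {x : Fin t → Fin m} {k : Fin t} {P : ℕ} (h : pos k (x k) < P) :
    term x k ≤ m ^ t * base t m ^ (P - 1) :=
  Nat.mul_le_mul (code_le x k) (Nat.pow_le_pow_right base_pos (by omega))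

lemma pos_le_of_term_le {x y : Fin t → Fin m} {k l : Fin t} (h : term x k ≤ term y l) :
    pos k (x k) ≤ pos l (y l) := by
  by_contra! hlt
  have h1 := term_le_of_pos_lt hlt
  have h2 : base t m ^ pos k (x k) ≤ term x k := Nat.le_mul_of_pos_left _ (code_pos x k)
  obtain ⟨P, hP⟩ : ∃ P, pos k (x k) = P + 1 := ⟨pos k (x k) - 1, by omega⟩
  rw [hP] at h1 h2
  rw [pow_succ, mul_comm] at h2
  have h3 : 0 < base t m ^ P := pow_pos base_pos _
  have h4 := lt_base (m := m) k
  simp only [Nat.add_sub_cancel] at h1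
  nlinarith

lemma depth_le_of_term_le {x y : Fin t → Fin m} {k l : Fin t} (h : term x k ≤ term y l) :
    l ≤ k := depth_le_of_pos_le (pos_le_of_term_le h)

lemma agree_of_term_eq {x y : Fin t → Fin m} {k l : Fin t} (h : term x k = term y l) :
    k = l ∧ ∀ j ≤ k, x j = y j := by
  have hp := le_antisymm (pos_le_of_term_le h.le) (pos_le_of_term_le h.ge)
  obtain ⟨rfl, hxy⟩ := pos_inj hp
  refine ⟨rfl, fun j hj => ?_⟩
  rcases hj.eq_or_lt with rfl | hj
  · exact hxy
  · unfold term at h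
    rw [hp] at h
    exact (code_eq_iff x y k).1 (Nat.eq_of_mul_eq_mul_right (pow_pos base_pos _) h) j hj

/-! ### Dominating terms of differences -/

/-- Comparing two integers compares the terms approximating them. -/
lemma Near.term_le {δ δ' : ℤ} {x y : Fin t → Fin m} {k l : Fin t} (h : Near δ x k)
    (h' : Near δ' y l) (hδ : δ ≤ δ') : term x k ≤ term y l := by
  by_contra! hlt
  have hB : (0 : ℤ) < base t m := by exact_mod_cast base_pos
  have hpos := pos_le_of_term_le hlt.le
  obtain ⟨h1, -⟩ := h
  obtain ⟨-, h2⟩ := h'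
  have hc : (1 : ℤ) ≤ code x k := by exact_mod_cast code_pos x k
  have hc' : (code y l : ℤ) ≤ m ^ t := by exact_mod_cast code_le y l
  have hb : (2 * m ^ t + 1 : ℤ) ≤ base t m := by exact_mod_cast lt_base k
  rcases hpos.eq_or_lt with he | hl
  · unfold term at hlt
    rw [he] at hlt h2
    have : code y l < code x k := lt_of_mul_lt_mul_right hlt (Nat.zero_le _)
    have h3 : (code y l : ℤ) + 1 ≤ code x k := by exact_mod_cast this
    have h4 : (0 : ℤ) < (base t m : ℤ) ^ pos k (x k) := pow_pos hB _
    nlinarith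
  · have h3 : (base t m : ℤ) ^ (pos l (y l) + 1) ≤ (base t m : ℤ) ^ pos k (x k) :=
      pow_le_pow_right₀ (by omega) hl
    rw [pow_succ] at h3
    have h4 : (0 : ℤ) < (base t m : ℤ) ^ pos l (y l) := pow_pos hB _
    have h5 : (base t m : ℤ) ^ pos l (y l) * (2 * code y l + 1) ≤
        (base t m : ℤ) ^ pos l (y l) * base t m := by gcongr; linarith
    have h6 : (base t m : ℤ) ^ pos k (x k) * 1 ≤
        (base t m : ℤ) ^ pos k (x k) * (2 * code x k - 1) := by gcongr; linarith
    linarith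

/-- The difference of two sequences that first differ at depth `k` is dominated by the term of the
larger one at depth `k`. -/
lemma near_sub {x x' : Fin t → Fin m} {k : Fin t} (h : ∀ j < k, x j = x' j) (hk : x' k < x k) :
    Near ((val x : ℤ) - val x') x k := by
  have hP : 1 ≤ pos k (x k) := by
    have : (x' k : ℕ) < x k := hk
    unfold pos
    omega
  set Q := base t m ^ (pos k (x k) - 1) with hQ
  have hQ0 : 0 < Q := pow_pos base_pos _
  have hBQ : base t m ^ pos k (x k) = base t m * Q := by
    rw [hQ, mul_comm, ← pow_succ, Nat.sub_add_cancel hP]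
  have hpos : ∀ j > k, ∀ p : Fin m, pos j p < pos k (x k) := by
    intro j hj p
    by_contra! hle
    exact absurd (depth_le_of_pos_le hle) (not_le.2 hj)
  have hx : val x = ∑ j with j < k, term x j + (term x k + ∑ j with k < j, term x j) := by
    unfold val
    rw [← Finset.sum_filter_add_sum_filter_not Finset.univ (fun j => j < k)]
    congr 1
    rw [← Finset.sum_insert (by simp)]
    congr 1
    ext j
    simp [le_iff_eq_or_lt, eq_comm]
  have hx' : val x' = ∑ j with j < k, term x j + ∑ j with ¬ j < k, term x' j := by
    unfold val
    rw [← Finset.sum_filter_add_sum_filter_not Finset.univ (fun j => j < k)]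
    congr 1
    refine Finset.sum_congr rfl fun j hj => ?_
    have hj : j < k := by simpa using hj
    unfold term
    rw [h j hj, (code_eq_iff x x' j).2 fun i hi => h i (hi.trans hj)]
  have hcard : ∀ s : Finset (Fin t), s.card ≤ t := fun s => by
    simpa using Finset.card_le_univ s
  have hR : ∑ j with k < j, term x j ≤ t * (m ^ t * Q) := by
    refine (Finset.sum_le_card_nsmul _ _ (m ^ t * Q) fun j hj => ?_).trans ?_
    · exact term_le_of_pos_lt (hpos j (by simpa using hj) _)
    · exact Nat.mul_le_mul_right _ (hcard _)
  have hR' : ∑ j with ¬ j < k, term x' j ≤ t * (m ^ t * Q) := by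
    refine (Finset.sum_le_card_nsmul _ _ (m ^ t * Q) fun j hj => ?_).trans ?_
    · refine term_le_of_pos_lt ?_
      have hj : k ≤ j := by simpa using hj
      rcases hj.eq_or_lt with rfl | hj
      · have : (x' k : ℕ) < x k := hk
        unfold pos
        omega
      · exact hpos j hj _
    · exact Nat.mul_le_mul_right _ (hcard _)
  have hT : term x k = code x k * (base t m * Q) := by rw [term, hBQ]
  have hb : base t m * Q = 2 * (t * (m ^ t * Q)) + Q := by unfold base; ring
  unfold Near
  have hBQ' : (base t m : ℤ) ^ pos k (x k) = ((base t m * Q : ℕ) : ℤ) := by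
    rw [← hBQ]; push_cast; rfl
  rw [hBQ', hx, hx', hT, mul_sub, mul_add]
  generalize base t m * Q = W at *
  push_cast
  have e : (W : ℤ) * (2 * code x k) = 2 * (code x k * W) := by ring
  rw [e]
  zify at hR hR' hb hQ0
  constructor <;> linarith [Finset.sum_nonneg (s := Finset.univ.filter fun j => k < j)
      (f := fun j => (term x j : ℤ)) fun i _ => by positivity,
    Finset.sum_nonneg (s := Finset.univ.filter fun j => ¬ j < k)
      (f := fun j => (term x' j : ℤ)) fun i _ => by positivity]

lemma Near.zero_lt {δ : ℤ} {x : Fin t → Fin m} {k : Fin t} (h : Near δ x k) : 0 < δ := by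
  have h1 := h.1
  have hc : (1 : ℤ) ≤ code x k := by exact_mod_cast code_pos x k
  have hB : (0 : ℤ) < (base t m : ℤ) ^ pos k (x k) := by
    have : (0 : ℤ) < base t m := by exact_mod_cast base_pos
    positivity
  nlinarith

lemma exists_near {x x' : Fin t → Fin m} (h : val x' < val x) :
    ∃ k, (∀ j < k, x j = x' j) ∧ x' k < x k ∧ Near ((val x : ℤ) - val x') x k := by
  obtain ⟨k, hk, hne⟩ := exists_first_ne (x := x) (y := x') (by rintro rfl; exact h.false)
  rcases lt_or_gt_of_ne hne with hlt | hgt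
  · have := (near_sub (fun j hj => (hk j hj).symm) hlt).zero_lt
    omega
  · exact ⟨k, hk, hgt, near_sub hk hgt⟩

lemma val_injective : Function.Injective (val : (Fin t → Fin m) → ℕ) := by
  intro x y h
  by_contra hne
  obtain ⟨k, hk, hne⟩ := exists_first_ne hne
  rcases lt_or_gt_of_ne hne with hlt | hgt
  · have := (near_sub (fun j hj => (hk j hj).symm) hlt).zero_lt
    omega
  · have := (near_sub hk hgt).zero_lt
    omega

lemma two_mul_val_lt (x : Fin t → Fin m) (ht : 1 ≤ t) : 2 * val x < base t m ^ (t * m) := by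
  have hm : 1 ≤ m := NeZero.one_le
  have htm : 1 ≤ t * m := Nat.mul_pos ht hm
  have h : val x ≤ t * (m ^ t * base t m ^ (t * m - 1)) := by
    unfold val
    refine (Finset.sum_le_card_nsmul _ _ (m ^ t * base t m ^ (t * m - 1)) fun j _ => ?_).trans ?_
    · refine term_le_of_pos_lt ?_
      have h1 := (x j).2
      have h2 : (t - 1 - j + 1) * m ≤ t * m := Nat.mul_le_mul_right _ (by omega)
      rw [add_mul] at h2
      unfold pos
      omega
    · simp
  have h0 : 0 < base t m ^ (t * m - 1) := pow_pos base_pos _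
  have h1 : base t m ^ (t * m) = base t m * base t m ^ (t * m - 1) := by
    rw [mul_comm (base t m), ← pow_succ, Nat.sub_add_cancel htm]
  have h2 : base t m * base t m ^ (t * m - 1) =
      2 * (t * (m ^ t * base t m ^ (t * m - 1))) + base t m ^ (t * m - 1) := by
    conv_lhs => rw [show base t m = 2 * t * m ^ t + 1 from rfl]
    unfold base; ring
  omega

/-! ### Avoiding the pattern -/

/-- When `s ≤ a 0`, the depths `a 0, …, a (t - 1)` are strictly increasing, hence exhaust the `t`
available depths. -/
lemma depth_eq_zero {ht : 0 < t} (a : ℕ → Fin t) (s : Fin t)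
    (hmono : ∀ k, k + 1 < t → a k ≤ a (k + 1))
    (heq : ∀ k, k + 1 < t → a k = a (k + 1) → a k < s) (hs : s ≤ a 0) : (a 0 : ℕ) = 0 := by
  have key : ∀ k, k < t → (a 0 : ℕ) + k ≤ a k := by
    intro k
    induction k with
    | zero => simp
    | succ k ih =>
      intro hk
      have h1 := ih (by omega)
      have h2 : (a k : ℕ) ≤ a (k + 1) := hmono k hk
      have h3 : (s : ℕ) ≤ a 0 := hs
      have h4 : (a k : ℕ) ≠ a (k + 1) := fun h => by
        have : (a k : ℕ) < s := heq k hk (Fin.ext h)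
        omega
      omega
  have h1 := key (t - 1) (by omega)
  have h2 := (a (t - 1)).2
  omega

/-- The configuration of rows `r` and columns `c` given by the pattern `X_t` does not occur with all
the prescribed differences `c j - r i` in the range of `val`. -/
lemma no_pattern (ht : 2 ≤ t) (r c : ℕ → ℤ)
    (hr : ∀ i j, i < j → j < 2 * t → r i < r j) (hc : ∀ i j, i < j → j ≤ 2 * t → c i < c j)
    (h : ∀ i j, XpatN t i j → ∃ x : Fin t → Fin m, c j - r i = val x) : False := by
  -- `x` and `y` correspond to the two corner entries of the last column.
  obtain ⟨x, hx⟩ := h 0 (2 * t) (by unfold XpatN; omega)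
  obtain ⟨y, hy⟩ := h (2 * t - 1) (2 * t) (by unfold XpatN; omega)
  have H1 : ∀ k, k < t → ∃ a : Fin t, Near (c (2 * t) - c (2 * k + 1)) x a ∧
      (k = 0 → ∃ x' : Fin t → Fin m, c 1 - r 0 = val x' ∧ x' a < x a) := by
    intro k hk
    obtain ⟨x', hx'⟩ := h 0 (2 * k + 1) (by unfold XpatN; omega)
    have hlt := hc (2 * k + 1) (2 * t) (by omega) le_rfl
    obtain ⟨a, -, ha, hn⟩ := exists_near (x := x) (x' := x') (by zify; linarith)
    refine ⟨a, by convert hn using 1; linarith, ?_⟩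
    rintro rfl
    exact ⟨x', hx', ha⟩
  have H2 : ∀ k, k < t → ∃ b : Fin t, Near (c (2 * t) - c (2 * k)) y b := by
    intro k hk
    obtain ⟨y', hy'⟩ := h (2 * t - 1) (2 * k) (by unfold XpatN; omega)
    have hlt := hc (2 * k) (2 * t) (by omega) le_rfl
    obtain ⟨b, -, -, hn⟩ := exists_near (x := y) (x' := y') (by zify; linarith)
    exact ⟨b, by convert hn using 1; linarith⟩
  -- In the last column, `r 0` is compared with the rows `r 1, r 3, …, r (2 * t - 1)`.
  have H3 : ∀ k, k < t → ∃ d : Fin t, Near (r (2 * k + 1) - r 0) x d ∧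
      (k = t - 1 → y d < x d) := by
    intro k hk
    obtain ⟨z, hz⟩ := h (2 * k + 1) (2 * t) (by unfold XpatN; omega)
    have hlt := hr 0 (2 * k + 1) (by omega) (by omega)
    obtain ⟨d, -, hd, hn⟩ := exists_near (x := x) (x' := z) (by zify; linarith)
    refine ⟨d, by convert hn using 1; linarith, ?_⟩
    rintro rfl
    rw [show 2 * (t - 1) + 1 = 2 * t - 1 by omega, hy] at hz
    rwa [val_injective (by exact_mod_cast hz : val y = val z)]
  obtain ⟨x₁, hx₁⟩ := h 0 1 (by unfold XpatN; omega)
  have H4 : ∀ k, k + 1 < t → ∃ e : Fin t, Near (r (2 * k + 2) - r 0) x₁ e := by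
    intro k hk
    obtain ⟨w, hw⟩ := h (2 * k + 2) 1 (by unfold XpatN; omega)
    have hlt := hr 0 (2 * k + 2) (by omega) (by omega)
    obtain ⟨e, -, -, hn⟩ := exists_near (x := x₁) (x' := w) (by zify; linarith)
    exact ⟨e, by convert hn using 1; linarith⟩
  have : Nonempty (Fin t) := ⟨⟨0, by omega⟩⟩
  choose! a ha ha' using H1
  choose! b hb using H2
  choose! d hd hd' using H3
  choose! e he using H4
  have ha0 : x₁ (a 0) < x (a 0) := by
    obtain ⟨x', h1, h2⟩ := ha' 0 (by omega) rfl
    rw [hx₁] at h1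
    rwa [val_injective (by exact_mod_cast h1 : val x₁ = val x')]
  have hs : y (d (t - 1)) < x (d (t - 1)) := hd' _ (by omega) rfl
  -- Alternation of the columns.
  have A1 : ∀ k, k + 1 < t → term x (a (k + 1)) ≤ term y (b (k + 1)) := fun k hk =>
    (ha _ hk).term_le (hb _ hk) (by
      have := hc (2 * (k + 1)) (2 * (k + 1) + 1) (by omega) (by omega); linarith)
  have A2 : ∀ k, k + 1 < t → term y (b (k + 1)) ≤ term x (a k) := fun k hk =>
    (hb _ hk).term_le (ha k (by omega)) (by
      have := hc (2 * k + 1) (2 * (k + 1)) (by omega) (by omega); linarith)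
  -- Alternation of the rows.
  have B1 : ∀ k, k + 1 < t → term x (d k) ≤ term x₁ (e k) := fun k hk =>
    (hd k (by omega)).term_le (he k hk) (by
      have := hr (2 * k + 1) (2 * k + 2) (by omega) (by omega); linarith)
  have B2 : ∀ k, k + 1 < t → term x₁ (e k) ≤ term x (d (k + 1)) := fun k hk =>
    (he k hk).term_le (hd _ hk) (by
      have := hr (2 * k + 2) (2 * (k + 1) + 1) (by omega) (by omega); linarith)
  have hzero : a 0 = d (t - 1) ∧ (a 0 : ℕ) = 0 := by
    rcases le_total (d (t - 1)) (a 0) with hle | hle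
    · have h0 := depth_eq_zero (ht := by omega) a (d (t - 1))
        (fun k hk => depth_le_of_term_le ((A1 k hk).trans (A2 k hk)))
        (fun k hk hE => by
          have h1 : term x (a k) = term y (b (k + 1)) :=
            le_antisymm (by have := A1 k hk; rwa [← hE] at this) (A2 k hk)
          by_contra! hcon
          exact hs.ne' ((agree_of_term_eq h1).2 _ hcon)) hle
      exact ⟨Fin.ext (by have : (d (t - 1) : ℕ) ≤ a 0 := hle; omega), h0⟩
    · have h0 := depth_eq_zero (ht := by omega) (fun k => d (t - 1 - k)) (a 0)
        (fun k hk => by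
          have h1 := B1 (t - 1 - (k + 1)) (by omega)
          have h2 := B2 (t - 1 - (k + 1)) (by omega)
          rw [show t - 1 - (k + 1) + 1 = t - 1 - k by omega] at h2
          exact depth_le_of_term_le (h1.trans h2))
        (fun k hk hE => by
          have h1 := B1 (t - 1 - (k + 1)) (by omega)
          have h2 := B2 (t - 1 - (k + 1)) (by omega)
          rw [show t - 1 - (k + 1) + 1 = t - 1 - k by omega] at h2
          rw [← hE] at h1
          by_contra! hcon
          exact ha0.ne' ((agree_of_term_eq (le_antisymm h1 h2)).2 _ hcon)) hle
      have h0 : (d (t - 1) : ℕ) = 0 := by simpa using h0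
      have h1 : (a 0 : ℕ) ≤ d (t - 1) := hle
      exact ⟨Fin.ext (by omega), by omega⟩
  obtain ⟨hE, h0⟩ := hzero
  rw [← hE] at hs
  -- The first two columns now contradict `y (a 0) < x (a 0)`.
  have h1 : term x (a 0) ≤ term y (b 0) := (ha 0 (by omega)).term_le (hb 0 (by omega)) (by
    have := hc 0 1 (by omega) (by omega)
    simp only [Nat.mul_zero, Nat.zero_add]
    linarith)
  have h2 : b 0 = a 0 := by
    have : (b 0 : ℕ) ≤ a 0 := depth_le_of_term_le h1
    exact Fin.ext (by omega)
  have h3 := pos_le_of_term_le h1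
  rw [h2] at h3
  have h4 : (y (a 0) : ℕ) < x (a 0) := hs
  unfold pos at h3
  omega

/-! ### The graph and its number of edges -/

/-- The graph on `n` ordered vertices joining the pairs whose difference is in the range of
`val`. -/
def graph (t m n : ℕ) [NeZero m] : SimpleGraph (Fin n) :=
  SimpleGraph.fromRel fun v w => ∃ x : Fin t → Fin m, (w : ℕ) = v + val x

lemma not_oContains_graph (ht : 2 ≤ t) (n : ℕ) : ¬ OContains (Hgraph t) (graph t m n) := by
  rintro ⟨f, hf, hadj⟩
  let g : ℕ → ℤ := fun i => if h : i < 4 * t + 1 then ((f ⟨i, h⟩ : ℕ) : ℤ) else 0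
  have hg : ∀ i j, i < j → j < 4 * t + 1 → g i < g j := by
    intro i j hij hj
    have hi : i < 4 * t + 1 := by omega
    simp only [g, hi, hj, dif_pos]
    have : f ⟨i, hi⟩ < f ⟨j, hj⟩ := hf (by simpa using hij)
    exact_mod_cast this
  refine no_pattern (m := m) ht g (fun j => g (2 * t + j)) (fun i j hij hj => hg i j hij (by omega))
    (fun i j hij hj => hg _ _ (by omega) (by omega)) fun i j hij => ?_
  have hi : i < 2 * t := by unfold XpatN at hij; omega
  have hj : j ≤ 2 * t := by unfold XpatN at hij; omega
  have hi' : i < 4 * t + 1 := by omega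
  have hj' : 2 * t + j < 4 * t + 1 := by omega
  have hH : (Hgraph t).Adj ⟨i, hi'⟩ ⟨2 * t + j, hj'⟩ := by
    rw [Hgraph, SimpleGraph.fromRel_adj]
    refine ⟨by simp only [ne_eq, Fin.mk.injEq]; omega, Or.inl ⟨hi, by simp, ?_⟩⟩
    simpa using hij
  have hG := hadj _ _ hH
  rw [graph, SimpleGraph.fromRel_adj] at hG
  have hlt : f ⟨i, hi'⟩ < f ⟨2 * t + j, hj'⟩ := hf (by simp only [Fin.mk_lt_mk]; omega)
  have hlt' : (f ⟨i, hi'⟩ : ℕ) < f ⟨2 * t + j, hj'⟩ := hlt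
  simp only [g, hi', hj', dif_pos]
  rcases hG.2 with ⟨x, hx⟩ | ⟨x, hx⟩
  · exact ⟨x, by rw [hx]; push_cast; ring⟩
  · omega

lemma le_ncard_edgeSet_graph (ht : 1 ≤ t) {n : ℕ} (hn : base t m ^ (t * m) ≤ n) :
    (n + 1) / 2 * m ^ t ≤ (graph t m n).edgeSet.ncard := by
  have hval : ∀ x : Fin t → Fin m, 2 * val x < n := fun x => (two_mul_val_lt x ht).trans_le hn
  have hpos : ∀ x : Fin t → Fin m, 0 < val x := fun x => by
    refine Finset.sum_pos (fun k _ => Nat.mul_pos (code_pos x k) (pow_pos base_pos _))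
      ⟨⟨0, ht⟩, Finset.mem_univ _⟩
  let F : Fin ((n + 1) / 2) × (Fin t → Fin m) → Sym2 (Fin n) := fun q =>
    s(⟨q.1, by have := q.1.2; have := hval q.2; omega⟩,
      ⟨q.1 + val q.2, by have := q.1.2; have := hval q.2; omega⟩)
  have hF : Function.Injective F := by
    rintro ⟨v, x⟩ ⟨w, y⟩ h
    simp only [F, Sym2.eq_iff, Fin.mk.injEq] at h
    have h1 := hpos x
    have h2 := hpos y
    have hvw : (v : ℕ) = w := by omega
    have hxy : val x = val y := by omega
    rw [Fin.ext hvw, val_injective hxy]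
  have hsub : Set.range F ⊆ (graph t m n).edgeSet := by
    rintro _ ⟨⟨v, x⟩, rfl⟩
    have := hpos x
    simp only [F, SimpleGraph.mem_edgeSet, graph, SimpleGraph.fromRel_adj, ne_eq, Fin.mk.injEq]
    exact ⟨by omega, Or.inl ⟨x, rfl⟩⟩
  calc (n + 1) / 2 * m ^ t = (Set.range F).ncard := by
        rw [← Set.image_univ, Set.ncard_image_of_injective _ hF, Set.ncard_univ]
        simp
    _ ≤ _ := Set.ncard_le_ncard hsub (Set.toFinite _)

lemma ncard_le_oex {k n : ℕ} (H : SimpleGraph (Fin k)) (G : SimpleGraph (Fin n))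
    (h : ¬ OContains H G) : G.edgeSet.ncard ≤ oex H n := by
  refine le_csSup ⟨(Set.univ : Set (Sym2 (Fin n))).ncard, ?_⟩ ⟨G, h, rfl⟩
  rintro _ ⟨G', -, rfl⟩
  exact Set.ncard_le_ncard (Set.subset_univ _) (Set.toFinite _)

/-! ### Choice of the parameter -/

open Filter in
lemma tendsto_div_log : Tendsto (fun y : ℝ => y / Real.log y) atTop atTop := by
  have h := Real.isLittleO_log_id_atTop.tendsto_div_nhds_zero
  have h2 : Tendsto (fun y : ℝ => Real.log y / y) atTop (nhdsWithin 0 (Set.Ioi 0)) := by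
    refine tendsto_nhdsWithin_iff.2 ⟨by simpa using h, ?_⟩
    filter_upwards [eventually_gt_atTop 1] with y hy
    exact div_pos (Real.log_pos hy) (by linarith)
  refine (tendsto_inv_nhdsGT_zero.comp h2).congr fun y => ?_
  simp

/-- The numerical condition under which the construction with parameter `m` fits into `n`. -/
lemma base_pow_le {t m n : ℕ} (ht : 1 ≤ t) (hm : 1 ≤ m) (hn : 1 ≤ n)
    (h1 : (m : ℝ) ≤ Real.log n / (t * (t + 1) * Real.log (Real.log n)))
    (h2 : Real.log (3 * t) ≤ Real.log (Real.log n)) (h3 : 1 ≤ Real.log (Real.log n)) :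
    base t m ^ (t * m) ≤ n := by
  have ht' : (1 : ℝ) ≤ t := by exact_mod_cast ht
  have hm' : (1 : ℝ) ≤ m := by exact_mod_cast hm
  have hn' : (0 : ℝ) < n := by exact_mod_cast hn
  set y := Real.log n with hy
  set z := Real.log y with hz
  have hK : (0 : ℝ) < t * (t + 1) * z := by positivity
  have h4 : (m : ℝ) * (t * (t + 1) * z) ≤ y := (le_div_iff₀ hK).1 h1
  have hmy : (m : ℝ) ≤ y := by
    have : (1 : ℝ) ≤ t * (t + 1) * z := by
      have : (1 : ℝ) ≤ t * (t + 1) := by nlinarith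
      nlinarith
    nlinarith
  have hlogm : Real.log m ≤ z := Real.log_le_log (by linarith) hmy
  have hbase : (base t m : ℝ) ≤ 3 * t * m ^ t := by
    have h : (1 : ℝ) ≤ (m : ℝ) ^ t := one_le_pow₀ hm'
    unfold base
    push_cast
    nlinarith
  have hb0 : (0 : ℝ) < base t m := by exact_mod_cast base_pos
  have hlogb : Real.log (base t m) ≤ (t + 1) * z := by
    calc Real.log (base t m) ≤ Real.log (3 * t * m ^ t) := Real.log_le_log hb0 hbase
      _ = Real.log (3 * t) + t * Real.log m := by
        rw [Real.log_mul (by positivity) (by positivity), Real.log_pow]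
      _ ≤ _ := by nlinarith
  have : ((base t m ^ (t * m) : ℕ) : ℝ) ≤ n := by
    rw [← Real.log_le_log_iff (by push_cast; positivity) hn']
    push_cast
    rw [Real.log_pow]
    push_cast
    calc (t * m : ℝ) * Real.log (base t m) ≤ t * m * ((t + 1) * z) := by gcongr
      _ = m * (t * (t + 1) * z) := by ring
      _ ≤ _ := h4
  exact_mod_cast this

end Xt

/-- There are `c > 0` and `n₀` such that for all `n ≥ n₀`,
`Ex(H_t, n) ≥ c · n · (log n / log log n)^t`. -/
theorem stmt19 (t : ℕ) (ht : 2 ≤ t) :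
    ∃ (c : ℝ) (n₀ : ℕ), 0 < c ∧ ∀ n : ℕ, n₀ ≤ n →
      c * n * (Real.log n / Real.log (Real.log n)) ^ t ≤ (oex (Hgraph t) n : ℝ) := by
  have ht0 : (0 : ℝ) < t := by positivity
  have hlog : Filter.Tendsto (fun n : ℕ => Real.log n) Filter.atTop Filter.atTop :=
    Real.tendsto_log_atTop.comp tendsto_natCast_atTop_atTop
  have hloglog := Real.tendsto_log_atTop.comp hlog
  obtain ⟨n₀, hn₀⟩ := Filter.eventually_atTop.1
    ((((Xt.tendsto_div_log.comp hlog).eventually_ge_atTop (t * (t + 1))).and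
      (hloglog.eventually_ge_atTop (Real.log (3 * t)))).and
      ((hloglog.eventually_ge_atTop 1).and (Filter.eventually_ge_atTop 1)))
  refine ⟨1 / 2 * (1 / (2 * (t * (t + 1)))) ^ t, n₀, by positivity, fun n hn => ?_⟩
  obtain ⟨⟨h1, h2⟩, h3, h4⟩ := hn₀ n hn
  simp only [Function.comp_apply] at h1 h2 h3
  set q := Real.log n / Real.log (Real.log n) with hq
  have hK : (0 : ℝ) < t * (t + 1) := by positivity
  have hL : 1 ≤ q / (t * (t + 1)) := (one_le_div hK).2 h1
  set m := ⌊q / (t * (t + 1))⌋₊ with hm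
  have hm1 : 1 ≤ m := Nat.le_floor (by exact_mod_cast hL)
  have : NeZero m := ⟨by omega⟩
  have hmle : (m : ℝ) ≤ q / (t * (t + 1)) := Nat.floor_le (by linarith)
  have hmge : 1 / (2 * (t * (t + 1))) * q ≤ m := by
    have h5 : q / (t * (t + 1)) < m + 1 := Nat.lt_floor_add_one _
    have h6 : (1 : ℝ) ≤ m := by exact_mod_cast hm1
    have h7 : 1 / (2 * (t * (t + 1))) * q = q / (t * (t + 1)) / 2 := by
      field_simp
    rw [h7]
    linarith
  have hfit : Xt.base t m ^ (t * m) ≤ n := by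
    refine Xt.base_pow_le (by omega) hm1 h4 (hmle.trans_eq ?_) h2 h3
    rw [hq, div_div, mul_comm (Real.log (Real.log n))]
  have hcount := (Xt.le_ncard_edgeSet_graph (by omega) hfit).trans
    (Xt.ncard_le_oex _ _ (Xt.not_oContains_graph (m := m) ht n))
  have hhalf : (n : ℝ) / 2 ≤ ((n + 1) / 2 : ℕ) := by
    have : n ≤ 2 * ((n + 1) / 2) := by omega
    have : (n : ℝ) ≤ 2 * ((n + 1) / 2 : ℕ) := by exact_mod_cast this
    linarith
  calc 1 / 2 * (1 / (2 * (t * (t + 1)))) ^ t * n * q ^ t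
      = n / 2 * (1 / (2 * (t * (t + 1))) * q) ^ t := by rw [mul_pow]; ring
    _ ≤ ((n + 1) / 2 : ℕ) * (m : ℝ) ^ t := by
      have : 0 ≤ q := hK.le.trans h1
      gcongr
    _ ≤ _ := by exact_mod_cast hcount
end
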